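/- arXiv:2009.09221 — 4 statements merged into one kernel-verified Lean document; each statement's English description precedes it below -/
import Mathlib

section
/- Any two homeomorphisms with north-south dynamics on Cantor spaces are topologically conjugate: if X and Y are Cantor spaces and T : X → X, S : Y → Y are homeomorphisms with north-south dynamics, then there is a homeomorphism Φ : X → Y with Φ ∘ T = S ∘ Φ. -/
/-!
Compactness turns the pointwise convergence into a clopen set `V` containing the attracting point,
missing the repelling one, and mapped into itself by `T`. The translates `Tⁿ V` shrink to the
attracting point as `n → ∞` and exhaust the complement of the repelling point as `n → -∞`, so the
complement of the two fixed points is the disjoint union of the translates of the clopen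
fundamental domain `V \ T V`. The fundamental domains of `T` and `S` are Cantor spaces, hence
homeomorphic by Brouwer's theorem, and a homeomorphism between them extends equivariantly. The
extension is continuous at the fixed points because it matches the translates of the two trapping
regions, which form neighbourhood bases there.
-/

open Filter Topology

/-- A homeomorphism `T` of a space has north-south dynamics if it has exactly
two fixed points `x⁺ ≠ x⁻`, every point other than `x⁻` converges to `x⁺`
under forward iteration, and every point other than `x⁺` converges to `x⁻`
under backward iteration. -/
def NorthSouth {X : Type*} [TopologicalSpace X] (T : X ≃ₜ X) : Prop :=
  ∃ xp xm : X, xp ≠ xm ∧ {x : X | T x = x} = {xp, xm} ∧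
    (∀ y : X, y ≠ xm → Tendsto (fun n => (⇑T)^[n] y) atTop (nhds xp)) ∧
    (∀ y : X, y ≠ xp → Tendsto (fun n => (⇑T.symm)^[n] y) atTop (nhds xm))

open Set PiNat

/-! ### Brouwer's characterization of the Cantor space -/

section CantorScheme

variable {X β : Type*} {A : List β → Set X}

lemma exists_forall_mem_res (hnil : A [] = univ) (hcons : ∀ l, ⋃ b, A (b :: l) = A l) (x : X) :
    ∃ f : ℕ → β, ∀ n, x ∈ A (res f n) := by
  have hex (l : List β) (hx : x ∈ A l) : ∃ b, x ∈ A (b :: l) := by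
    rwa [← hcons, mem_iUnion] at hx
  have hroot : x ∈ A [] := hnil ▸ mem_univ x
  have : Nonempty β := ⟨(hex [] hroot).choose⟩
  choose! next hnext using hex
  let prefixOf (n : ℕ) : List β := (fun l => next l :: l)^[n] []
  have prefixOf_succ (n : ℕ) : prefixOf (n + 1) = next (prefixOf n) :: prefixOf n :=
    Function.iterate_succ_apply' _ _ _
  have res_eq (n : ℕ) : res (fun k => next (prefixOf k)) n = prefixOf n := by
    induction n with
    | zero => rfl
    | succ n ih => rw [res_succ, ih, prefixOf_succ]
  refine ⟨fun n => next (prefixOf n), fun n => ?_⟩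
  rw [res_eq]
  induction n with
  | zero => exact hroot
  | succ n ih => exact prefixOf_succ n ▸ hnext _ ih

theorem nonempty_homeomorph_of_cantorScheme [TopologicalSpace β] [DiscreteTopology β] [Finite β]
    [TopologicalSpace X] [CompactSpace X] [T2Space X]
    (hnil : A [] = univ) (hcons : ∀ l, ⋃ b, A (b :: l) = A l) (hdisj : CantorScheme.Disjoint A)
    (hclosed : ∀ l, IsClosed (A l)) (hne : ∀ l, (A l).Nonempty)
    (hsep : ∀ f : ℕ → β, (⋂ n, A (res f n)).Subsingleton) : Nonempty ((ℕ → β) ≃ₜ X) := by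
  have hanti (f : ℕ → β) : Antitone fun n => A (res f n) :=
    antitone_nat_of_succ_le fun n => by
      rw [← hcons (res f n), res_succ]
      exact subset_iUnion (fun b => A (b :: res f n)) (f n)
  have hdom (f : ℕ → β) : f ∈ (CantorScheme.inducedMap A).1 :=
    IsCompact.nonempty_iInter_of_sequence_nonempty_isCompact_isClosed _
      (fun n => hanti f n.le_succ) (fun _ => hne _) (hclosed _).isCompact fun _ => hclosed _
  let φ (f : ℕ → β) : X := (CantorScheme.inducedMap A).2 ⟨f, hdom f⟩
  have φ_mem (f : ℕ → β) (n : ℕ) : φ f ∈ A (res f n) := CantorScheme.map_mem ⟨f, hdom f⟩ n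
  have hinj : Function.Injective φ := fun f g hfg =>
    congrArg Subtype.val (hdisj.map_injective hfg)
  have hsurj : Function.Surjective φ := fun x => by
    obtain ⟨f, hf⟩ := exists_forall_mem_res hnil hcons x
    exact ⟨f, hsep f (mem_iInter.2 (φ_mem f)) (mem_iInter.2 hf)⟩
  have hcont : Continuous φ := continuous_iff_continuousAt.2 fun f O hO => by
    obtain ⟨n, hn⟩ : ∃ n, A (res f n) ⊆ O :=
      exists_subset_nhds_of_compactSpace (hanti f).directed_ge (fun _ => hclosed _) fun x hx => by
        rwa [hsep f hx (mem_iInter.2 (φ_mem f))]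
    have hcyl : cylinder f n ∈ 𝓝 f := (isOpen_cylinder _ f n).mem_nhds (self_mem_cylinder f n)
    refine mem_map.2 <| mem_of_superset hcyl fun g hg => ?_
    rw [cylinder_eq_res] at hg
    exact hn (hg ▸ φ_mem g n)
  exact ⟨hcont.homeoOfEquivCompactToT2 (f := Equiv.ofBijective φ ⟨hinj, hsurj⟩)⟩

/-- The scheme obtained from the whole space by cutting, at stage `n`, each set `C` into the
pieces `split n C b`. -/
def splittingScheme (split : ℕ → Set X → β → Set X) : List β → Set X
  | [] => univ
  | b :: l => split l.length (splittingScheme split l) b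

end CantorScheme

section Brouwer

variable {X : Type*} [TopologicalSpace X]

lemma perfectSpace_coe_of_preperfect {C : Set X} (hC : Preperfect C) : PerfectSpace C :=
  perfectSpace_iff_forall_not_isolated.2 fun x => nhds_ne_subtype_neBot_iff.2 (hC x x.2)

lemma exists_isClopen_partition [TotallySeparatedSpace X] [PerfectSpace X] {U C : Set X}
    (hU : IsClopen U) (hC : IsClopen C) (hne : C.Nonempty) :
    ∃ A : Bool → Set X, (∀ b, IsClopen (A b)) ∧ (∀ b, (A b).Nonempty) ∧
      Pairwise (Function.onFun Disjoint A) ∧ ⋃ b, A b = C ∧ ∀ b, A b ⊆ U ∨ Disjoint (A b) U := by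
  suffices ∃ P : Set X, IsClopen P ∧ (C ∩ P).Nonempty ∧ (C \ P).Nonempty ∧
      (C ∩ P ⊆ U ∨ Disjoint (C ∩ P) U) ∧ (C \ P ⊆ U ∨ Disjoint (C \ P) U) by
    obtain ⟨P, hP, hne₁, hne₂, hU₁, hU₂⟩ := this
    refine ⟨fun b => bif b then C ∩ P else C \ P, ?_, ?_, ?_, ?_, ?_⟩
    · exact Bool.forall_bool.2 ⟨hC.diff hP, hC.inter hP⟩
    · exact Bool.forall_bool.2 ⟨hne₂, hne₁⟩
    · exact pairwise_disjoint_on_bool.2 disjoint_sdiff_inter.symm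
    · rw [← union_eq_iUnion, inter_union_sdiff]
    · exact Bool.forall_bool.2 ⟨hU₂, hU₁⟩
  by_cases hcut : (C ∩ U).Nonempty ∧ (C \ U).Nonempty
  · exact ⟨U, hU, hcut.1, hcut.2, .inl inter_subset_right, .inr disjoint_sdiff_left⟩
  have hside : C ⊆ U ∨ Disjoint C U := by
    rwa [not_and_or, not_nonempty_iff_eq_empty, not_nonempty_iff_eq_empty, sdiff_eq_empty,
      ← disjoint_iff_inter_eq_empty, or_comm] at hcut
  obtain ⟨x, hx⟩ := hne
  obtain ⟨y, ⟨-, hy⟩, hyx⟩ := accPt_iff_nhds.1 (hC.isOpen.preperfect x hx) univ univ_mem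
  obtain ⟨P, hP, hxP, hyP⟩ := exists_isClopen_of_totally_separated hyx.symm
  exact ⟨P, hP, ⟨x, hx, hxP⟩, ⟨y, hy, hyP⟩,
    hside.imp inter_subset_left.trans (.mono_left inter_subset_left),
    hside.imp sdiff_subset.trans (.mono_left sdiff_subset)⟩

theorem nonempty_homeomorph_nat_bool [Nonempty X] [CompactSpace X]
    [TopologicalSpace.MetrizableSpace X] [TotallyDisconnectedSpace X] [PerfectSpace X] :
    Nonempty (X ≃ₜ (ℕ → Bool)) := by
  have : SecondCountableTopology X := by
    let _ := TopologicalSpace.metrizableSpaceMetric X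
    infer_instance
  have : Countable (TopologicalSpace.Clopens X) :=
    TopologicalSpace.Clopens.countable_iff_secondCountable.2 this
  obtain ⟨U, hU⟩ := exists_surjective_nat (TopologicalSpace.Clopens X)
  choose! split split_clopen split_nonempty split_disjoint split_union split_side using
    fun n (C : Set X) (hC : IsClopen C) (hne : C.Nonempty) =>
      exists_isClopen_partition (U n).isClopen hC hne
  let A := splittingScheme split
  have hA (l : List Bool) : IsClopen (A l) ∧ (A l).Nonempty := by
    induction l with
    | nil => exact ⟨isClopen_univ, univ_nonempty⟩
    | cons b l ih => exact ⟨split_clopen _ _ ih.1 ih.2 b, split_nonempty _ _ ih.1 ih.2 b⟩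
  have hsep (f : ℕ → Bool) : (⋂ n, A (res f n)).Subsingleton := fun x hx y hy => by
    by_contra hxy
    obtain ⟨V, hV, hxV, hyV⟩ := exists_isClopen_of_totally_separated hxy
    obtain ⟨n, hn⟩ := hU ⟨V, hV⟩
    have hside : A (res f (n + 1)) ⊆ V ∨ Disjoint (A (res f (n + 1))) V := by
      simpa [A, splittingScheme, hn] using split_side n (A (res f n)) (hA _).1 (hA _).2 (f n)
    exact hside.elim (fun h => hyV (h (mem_iInter.1 hy _)))
      fun h => h.notMem_of_mem_left (mem_iInter.1 hx _) hxV
  obtain ⟨e⟩ := nonempty_homeomorph_of_cantorScheme (A := A) rfl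
    (fun l => split_union _ _ (hA l).1 (hA l).2) (fun l => split_disjoint _ _ (hA l).1 (hA l).2)
    (fun l => (hA l).1.isClosed) (fun l => (hA l).2) hsep
  exact ⟨e.symm⟩

end Brouwer

/-! ### Translates of a forward invariant set -/

section Translates

variable {X : Type*} [TopologicalSpace X] {T : X ≃ₜ X} {V : Set X}

lemma mem_zpow_image_iff {n : ℤ} {x : X} : x ∈ (T ^ n) '' V ↔ (T ^ (-n)) x ∈ V := by
  rw [Homeomorph.image_eq_preimage_symm, zpow_neg]
  rfl

lemma coe_homeomorph_pow (T : X ≃ₜ X) (n : ℕ) : ⇑(T ^ n) = T^[n] :=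
  hom_coe_pow (fun R : X ≃ₜ X => ⇑R) rfl (fun _ _ => rfl) T n

lemma mem_zpow_natCast_image_iff {n : ℕ} {x : X} :
    x ∈ (T ^ (n : ℤ)) '' V ↔ T.symm^[n] x ∈ V := by
  rw [mem_zpow_image_iff, zpow_neg, zpow_natCast, ← inv_pow, coe_homeomorph_pow]
  rfl

lemma mem_zpow_neg_natCast_image_iff {n : ℕ} {x : X} :
    x ∈ (T ^ (-n : ℤ)) '' V ↔ T^[n] x ∈ V := by
  rw [mem_zpow_image_iff, neg_neg, zpow_natCast, coe_homeomorph_pow]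

lemma mem_zpow_image_iff_of_isFixedPt {x : X} (hx : Function.IsFixedPt T x) {n : ℤ} :
    x ∈ (T ^ n) '' V ↔ x ∈ V := by
  have hinv : Function.IsFixedPt T.symm x := hx.equiv_symm (e := T.toEquiv)
  obtain ⟨n, rfl | rfl⟩ := n.eq_nat_or_neg
  · rw [mem_zpow_natCast_image_iff, Function.iterate_fixed hinv]
  · rw [mem_zpow_neg_natCast_image_iff, Function.iterate_fixed hx]

lemma zpow_apply_mem_zpow_image_iff {m n : ℤ} {x : X} :
    (T ^ n) x ∈ (T ^ m) '' V ↔ x ∈ (T ^ (m - n)) '' V := by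
  rw [mem_zpow_image_iff, mem_zpow_image_iff, ← Homeomorph.mul_apply, ← zpow_add]
  ring_nf

lemma antitone_zpow_image (hT : MapsTo T V V) : Antitone fun n : ℤ => (T ^ n) '' V :=
  antitone_int_of_succ_le fun n => by
    rintro _ ⟨x, hx, rfl⟩
    exact ⟨T x, hT hx, by rw [zpow_add_one, Homeomorph.mul_apply]⟩

lemma isClopen_zpow_image (hV : IsClopen V) (n : ℤ) : IsClopen ((T ^ n) '' V) :=
  ⟨(T ^ n).isClosed_image.2 hV.isClosed, (T ^ n).isOpen_image.2 hV.isOpen⟩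

/-- The part of a forward invariant set `V` that is not in its image. Its translates are the
successive differences of the decreasing sequence of translates of `V`. -/
def fundamentalDomain (T : X ≃ₜ X) (V : Set X) : Set X := V \ T '' V

lemma isClopen_fundamentalDomain (hV : IsClopen V) : IsClopen (fundamentalDomain T V) := by
  simpa [fundamentalDomain] using hV.diff (isClopen_zpow_image hV 1)

lemma mem_fundamentalDomain_iff (hT : MapsTo T V V) {x : X} :
    x ∈ fundamentalDomain T V ↔ ∀ m : ℤ, x ∈ (T ^ m) '' V ↔ m ≤ 0 := by
  refine ⟨fun hx m => ⟨fun hm => ?_, fun hm => ?_⟩, fun h => ⟨?_, ?_⟩⟩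
  · by_contra! hpos
    exact hx.2 (by simpa using antitone_zpow_image hT (Int.add_one_le_of_lt hpos) hm)
  · exact antitone_zpow_image hT hm (by simpa using hx.1)
  · simpa using (h 0).2 le_rfl
  · simpa using (h 1).not.2 (by lia)

lemma zpow_apply_mem_zpow_image_iff_le (hT : MapsTo T V V) {d : X}
    (hd : d ∈ fundamentalDomain T V) {m n : ℤ} : (T ^ n) d ∈ (T ^ m) '' V ↔ m ≤ n := by
  rw [zpow_apply_mem_zpow_image_iff, (mem_fundamentalDomain_iff hT).1 hd, sub_nonpos]

/-- The parametrization of the translates of the fundamental domain. -/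
def domainTranslate (T : X ≃ₜ X) (V : Set X) (p : ℤ × fundamentalDomain T V) : X := (T ^ p.1) p.2

lemma domainTranslate_injective (hT : MapsTo T V V) : Function.Injective (domainTranslate T V) := by
  rintro ⟨n, d⟩ ⟨m, d'⟩ (h : (T ^ n) d = (T ^ m) d')
  have hle (k : ℤ) : k ≤ n ↔ k ≤ m := by
    rw [← zpow_apply_mem_zpow_image_iff_le hT d.2, h, zpow_apply_mem_zpow_image_iff_le hT d'.2]
  obtain rfl : n = m := eq_of_forall_le_iff hle
  rw [Subtype.ext ((T ^ n).injective h)]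

lemma range_domainTranslate (hT : MapsTo T V V) :
    range (domainTranslate T V) = (⋃ n : ℤ, (T ^ n) '' V) \ ⋂ n : ℤ, (T ^ n) '' V := by
  ext x
  simp only [mem_range, Set.mem_sdiff, mem_iUnion, mem_iInter, not_forall]
  constructor
  · rintro ⟨⟨n, d⟩, rfl⟩
    exact ⟨⟨n, (zpow_apply_mem_zpow_image_iff_le hT d.2).2 le_rfl⟩,
      n + 1, (zpow_apply_mem_zpow_image_iff_le hT d.2).not.2 (by lia)⟩
  · rintro ⟨hex, a, ha⟩
    obtain ⟨n, hn, hmax⟩ := Int.exists_greatest_of_bdd (P := fun m => x ∈ (T ^ m) '' V)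
      ⟨a, fun m hm => le_of_not_ge fun ham => ha (antitone_zpow_image hT ham hm)⟩ hex
    refine ⟨(n, ⟨(T ^ (-n)) x, (mem_fundamentalDomain_iff hT).2 fun m => ?_⟩), ?_⟩
    · rw [zpow_apply_mem_zpow_image_iff, sub_neg_eq_add]
      exact ⟨fun h => by linarith [hmax _ h], fun h => antitone_zpow_image hT (by lia) hn⟩
    · rw [domainTranslate, ← Homeomorph.mul_apply, ← zpow_add, add_neg_cancel, zpow_zero,
        Homeomorph.one_apply]

lemma isOpenEmbedding_domainTranslate (hT : MapsTo T V V) (hV : IsClopen V) :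
    IsOpenEmbedding (domainTranslate T V) := by
  refine .of_continuous_injective_isOpenMap ?_ (domainTranslate_injective hT) ?_
  · exact continuous_prod_of_discrete_left.2 fun n =>
      (T ^ n).continuous.comp continuous_subtype_val
  · exact isOpenMap_prod_of_discrete_left.2 fun n =>
      (T ^ n).isOpenMap.comp (isClopen_fundamentalDomain hV).isOpen.isOpenMap_subtype_val

lemma apply_domainTranslate (p : ℤ × fundamentalDomain T V) :
    T (domainTranslate T V p) = domainTranslate T V (p.1 + 1, p.2) := by
  rw [domainTranslate, domainTranslate, ← Homeomorph.mul_apply, ← zpow_one_add, add_comm]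

end Translates

/-! ### Trapping regions -/

section TrappingRegion

variable {X : Type*} [TopologicalSpace X] {T : X ≃ₜ X} {xp xm : X} {V : Set X}

lemma hasBasis_nhds_of_iInter_eq_singleton [CompactSpace X] {ι : Type*} [Nonempty ι]
    {U : ι → Set X} (hdir : Directed (· ⊇ ·) U) (hU : ∀ i, IsClopen (U i)) {x : X}
    (hx : ⋂ i, U i = {x}) : (𝓝 x).HasBasis (fun _ => True) U := by
  refine hasBasis_iff.2 fun O => ⟨fun hO => ?_, fun ⟨i, _, hi⟩ => ?_⟩
  · obtain ⟨i, hi⟩ := exists_subset_nhds_of_compactSpace hdir (fun i => (hU i).isClosed) (U := O)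
      (by simpa [hx] using hO)
    exact ⟨i, trivial, hi⟩
  · have hxi : x ∈ U i := iInter_subset U i (hx ▸ mem_singleton x)
    exact mem_of_superset ((hU i).isOpen.mem_nhds hxi) hi

/-- A clopen set `V` with `T V ⊆ V` whose forward translates shrink to the attracting point `xp`
and whose backward translates exhaust the complement of the repelling point `xm`. As the translates
are nested, the intersection and the union may be taken over all of `ℤ`. -/
structure IsTrappingRegion (T : X ≃ₜ X) (xp xm : X) (V : Set X) : Prop where
  isClopen : IsClopen V
  mapsTo : MapsTo T V V
  iInter_eq : ⋂ n : ℤ, (T ^ n) '' V = {xp}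
  iUnion_eq : ⋃ n : ℤ, (T ^ n) '' V = {xm}ᶜ

-- The points whose whole backward orbit stays in `U` form a decreasing intersection of clopen sets
-- contained in `T ⁻¹' U`; by compactness a finite stage of it is too, and that stage is `V`.
lemma exists_isClopen_mapsTo [CompactSpace X] {U : Set X} (hU : IsClopen U)
    (hTU : ∀ x, (∀ n, T.symm^[n] x ∈ U) → T x ∈ U) :
    ∃ V ⊆ U, IsClopen V ∧ MapsTo T V V ∧ ∀ x, (∀ n, T.symm^[n] x ∈ U) → x ∈ V := by
  let A (N : ℕ) : Set X := ⋂ j ∈ Iic N, T.symm^[j] ⁻¹' U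
  have mem_A {N : ℕ} {x : X} : x ∈ A N ↔ ∀ j ≤ N, T.symm^[j] x ∈ U := by simp [A]
  have hA (N : ℕ) : IsClopen (A N) := (finite_Iic N).isClopen_biInter fun j _ =>
    hU.preimage (T.symm.continuous.iterate j)
  have hanti : Antitone A := fun m n hmn => biInter_subset_biInter_left (Iic_subset_Iic.2 hmn)
  obtain ⟨N, hN⟩ : ∃ N, A N ⊆ T ⁻¹' U :=
    exists_subset_nhds_of_compactSpace hanti.directed_ge (fun N => (hA N).isClosed) fun x hx =>
      (hU.preimage T.continuous).isOpen.mem_nhds <|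
        hTU x fun n => mem_A.1 (mem_iInter.1 hx n) n le_rfl
  refine ⟨A N, fun x hx => mem_A.1 hx 0 N.zero_le, hA N, fun x hx => mem_A.2 fun j hj => ?_,
    fun x hx => mem_A.2 fun j _ => hx j⟩
  cases j with
  | zero => exact hN hx
  | succ j =>
    rw [Function.iterate_succ_apply, T.symm_apply_apply]
    exact mem_A.1 hx j (Nat.le_of_succ_le hj)

theorem NorthSouth.exists_isTrappingRegion [CompactSpace X] [TotallySeparatedSpace X]
    (hT : NorthSouth T) : ∃ (xp xm : X) (V : Set X), IsTrappingRegion T xp xm V := by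
  obtain ⟨xp, xm, hne, hfix, hfwd, hbwd⟩ := hT
  have hp : T xp = xp := hfix.superset (.inl rfl)
  have hm : T xm = xm := hfix.superset (.inr rfl)
  obtain ⟨U, hU, hpU, hmU⟩ := exists_isClopen_of_totally_separated hne
  have eq_of_backward_orbit_subset (x : X) (hx : ∀ n, T.symm^[n] x ∈ U) : x = xp := by
    by_contra hxp
    obtain ⟨n, hn⟩ := ((hbwd x hxp).eventually (hU.compl.isOpen.mem_nhds hmU)).exists
    exact hn (hx n)
  obtain ⟨V, hVU, hV, hTV, hmem⟩ := exists_isClopen_mapsTo (T := T) hU fun x hx => by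
    rwa [eq_of_backward_orbit_subset x hx, hp]
  have hpV : xp ∈ V := hmem xp fun n =>
    mem_zpow_natCast_image_iff.1 ((mem_zpow_image_iff_of_isFixedPt hp).2 hpU)
  refine ⟨xp, xm, V, hV, hTV, ?_, ?_⟩
  · refine eq_singleton_iff_unique_mem.2
      ⟨mem_iInter.2 fun n => (mem_zpow_image_iff_of_isFixedPt hp).2 hpV, fun x hx => ?_⟩
    exact eq_of_backward_orbit_subset x fun n =>
      hVU (mem_zpow_natCast_image_iff.1 (mem_iInter.1 hx n))
  · refine Subset.antisymm (iUnion_subset fun n => ?_) fun x hx => ?_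
    · exact subset_compl_singleton_iff.2 fun h =>
        hmU (hVU ((mem_zpow_image_iff_of_isFixedPt hm).1 h))
    · obtain ⟨n, hn⟩ := ((hfwd x hx).eventually (hV.isOpen.mem_nhds hpV)).exists
      exact mem_iUnion.2 ⟨-n, mem_zpow_neg_natCast_image_iff.2 hn⟩

namespace IsTrappingRegion

lemma attracting_mem (h : IsTrappingRegion T xp xm V) (n : ℤ) : xp ∈ (T ^ n) '' V :=
  mem_iInter.1 (h.iInter_eq.superset rfl) n

lemma repelling_notMem (h : IsTrappingRegion T xp xm V) (n : ℤ) : xm ∉ (T ^ n) '' V :=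
  fun hn => h.iUnion_eq.subset (mem_iUnion_of_mem n hn) rfl

lemma apply_attracting (h : IsTrappingRegion T xp xm V) : T xp = xp := by
  refine h.iInter_eq.subset (mem_iInter.2 fun n => ?_)
  simpa using (zpow_apply_mem_zpow_image_iff (T := T) (n := 1)).2 (h.attracting_mem (n - 1))

lemma apply_repelling (h : IsTrappingRegion T xp xm V) : T xm = xm := by
  by_contra hne
  obtain ⟨n, hn⟩ := mem_iUnion.1 (h.iUnion_eq.superset hne)
  exact h.repelling_notMem (n - 1)
    ((zpow_apply_mem_zpow_image_iff (n := 1)).1 (by simpa using hn))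

lemma attracting_ne_repelling (h : IsTrappingRegion T xp xm V) : xp ≠ xm :=
  fun heq => h.repelling_notMem 0 (heq ▸ h.attracting_mem 0)

lemma range_domainTranslate (h : IsTrappingRegion T xp xm V) :
    range (domainTranslate T V) = {xm}ᶜ \ {xp} := by
  rw [_root_.range_domainTranslate h.mapsTo, h.iUnion_eq, h.iInter_eq]

lemma fundamentalDomain_nonempty [PerfectSpace X] (h : IsTrappingRegion T xp xm V) :
    (fundamentalDomain T V).Nonempty := by
  have hp : xp ∈ V := by simpa using h.attracting_mem 0
  obtain ⟨y, ⟨-, hy⟩, hyp⟩ :=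
    accPt_iff_nhds.1 (h.isClopen.isOpen.preperfect xp hp) univ univ_mem
  have hym : y ≠ xm := fun heq => h.repelling_notMem 0 (by simpa [← heq] using hy)
  obtain ⟨⟨-, d⟩, -⟩ := h.range_domainTranslate.superset ⟨hym, hyp⟩
  exact ⟨d, d.2⟩

lemma hasBasis_nhds_attracting [CompactSpace X] (h : IsTrappingRegion T xp xm V) :
    (𝓝 xp).HasBasis (fun _ => True) fun n : ℤ => (T ^ n) '' V :=
  hasBasis_nhds_of_iInter_eq_singleton (antitone_zpow_image h.mapsTo).directed_ge
    (isClopen_zpow_image h.isClopen) h.iInter_eq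

lemma hasBasis_nhds_repelling [CompactSpace X] (h : IsTrappingRegion T xp xm V) :
    (𝓝 xm).HasBasis (fun _ => True) fun n : ℤ => ((T ^ n) '' V)ᶜ :=
  hasBasis_nhds_of_iInter_eq_singleton
    (Monotone.directed_ge fun _ _ hmn => compl_subset_compl.2 (antitone_zpow_image h.mapsTo hmn))
    (fun n => (isClopen_zpow_image h.isClopen n).compl)
    (by rw [← compl_iUnion, h.iUnion_eq, compl_compl])

lemma bijective_sumElim_domainTranslate (h : IsTrappingRegion T xp xm V) :
    Function.Bijective
      (Sum.elim (fun b => bif b then xp else xm : Bool → X) (domainTranslate T V)) := by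
  have hpts : range (fun b => bif b then xp else xm : Bool → X) = {xm, xp} := by
    ext x; simp [eq_comm]
  have hrange : range (domainTranslate T V) = {xm, xp}ᶜ := by
    rw [h.range_domainTranslate, sdiff_eq, ← compl_union, singleton_union]
  have hdisj : Disjoint (range (fun b => bif b then xp else xm : Bool → X))
      (range (domainTranslate T V)) := by
    rw [hpts, hrange]
    exact disjoint_compl_right
  refine ⟨.sumElim ?_ (domainTranslate_injective h.mapsTo) fun b p =>
    hdisj.ne_of_mem (mem_range_self b) (mem_range_self p), range_eq_univ.1 ?_⟩
  · exact Bool.injective_iff.2 h.attracting_ne_repelling.symm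
  · rw [Sum.elim_range, hpts, hrange, union_compl_self]

/-- The decomposition of the space into the attracting point (labelled `true`), the repelling point
(labelled `false`) and the translates of the fundamental domain. -/
noncomputable def decomposition (h : IsTrappingRegion T xp xm V) :
    Bool ⊕ ℤ × fundamentalDomain T V ≃ X :=
  .ofBijective _ h.bijective_sumElim_domainTranslate

lemma decomposition_true (h : IsTrappingRegion T xp xm V) : h.decomposition (.inl true) = xp := rfl

lemma decomposition_false (h : IsTrappingRegion T xp xm V) : h.decomposition (.inl false) = xm :=
  rfl

lemma decomposition_inr (h : IsTrappingRegion T xp xm V) (p : ℤ × fundamentalDomain T V) :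
    h.decomposition (.inr p) = domainTranslate T V p := rfl

lemma eq_fixedPt_or_eq_domainTranslate (h : IsTrappingRegion T xp xm V) (x : X) :
    x = xp ∨ x = xm ∨ ∃ p, x = domainTranslate T V p := by
  obtain ⟨(_ | _) | p, rfl⟩ := h.decomposition.surjective x
  exacts [.inr (.inl rfl), .inl rfl, .inr (.inr ⟨p, rfl⟩)]

end IsTrappingRegion

end TrappingRegion

/-! ### Conjugating two trapping regions -/

section EquivariantExtension

namespace IsTrappingRegion

variable {X Y : Type*} [TopologicalSpace X] [TopologicalSpace Y] {T : X ≃ₜ X} {S : Y ≃ₜ Y}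
  {xp xm : X} {yp ym : Y} {V : Set X} {W : Set Y}

/-- The equivariant extension of a bijection between the fundamental domains of two trapping
regions. It matches the attracting points and the repelling points. -/
noncomputable def extend (h : IsTrappingRegion T xp xm V) (h' : IsTrappingRegion S yp ym W)
    (e : fundamentalDomain T V ≃ fundamentalDomain S W) : X ≃ Y :=
  h.decomposition.symm.trans <|
    (Equiv.sumCongr (.refl Bool) (.prodCongr (.refl ℤ) e)).trans h'.decomposition

variable (h : IsTrappingRegion T xp xm V) (h' : IsTrappingRegion S yp ym W)
  (e : fundamentalDomain T V ≃ fundamentalDomain S W)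

lemma extend_attracting : h.extend h' e xp = yp := by
  simp [extend, h.decomposition.symm_apply_eq.2 h.decomposition_true.symm, decomposition_true]

lemma extend_repelling : h.extend h' e xm = ym := by
  simp [extend, h.decomposition.symm_apply_eq.2 h.decomposition_false.symm, decomposition_false]

lemma extend_domainTranslate (p : ℤ × fundamentalDomain T V) :
    h.extend h' e (domainTranslate T V p) = domainTranslate S W (p.1, e p.2) := by
  simp [extend, h.decomposition.symm_apply_eq.2 (h.decomposition_inr p).symm, decomposition_inr,
    Prod.map]

lemma extend_apply_apply (x : X) : h.extend h' e (T x) = S (h.extend h' e x) := by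
  obtain rfl | rfl | ⟨p, rfl⟩ := h.eq_fixedPt_or_eq_domainTranslate x
  · rw [h.apply_attracting, extend_attracting, h'.apply_attracting]
  · rw [h.apply_repelling, extend_repelling, h'.apply_repelling]
  · rw [apply_domainTranslate, extend_domainTranslate, extend_domainTranslate,
      apply_domainTranslate]

lemma extend_mem_zpow_image_iff {n : ℤ} {x : X} :
    h.extend h' e x ∈ (S ^ n) '' W ↔ x ∈ (T ^ n) '' V := by
  obtain rfl | rfl | ⟨p, rfl⟩ := h.eq_fixedPt_or_eq_domainTranslate x
  · rw [extend_attracting]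
    exact iff_of_true (h'.attracting_mem n) (h.attracting_mem n)
  · rw [extend_repelling]
    exact iff_of_false (h'.repelling_notMem n) (h.repelling_notMem n)
  · rw [extend_domainTranslate, domainTranslate, domainTranslate,
      zpow_apply_mem_zpow_image_iff_le h'.mapsTo (e p.2).2,
      zpow_apply_mem_zpow_image_iff_le h.mapsTo p.2.2]

lemma continuous_extend [CompactSpace X] [CompactSpace Y] (he : Continuous e) :
    Continuous (h.extend h' e) := by
  refine continuous_iff_continuousAt.2 fun x => ?_
  obtain rfl | rfl | ⟨p, rfl⟩ := h.eq_fixedPt_or_eq_domainTranslate x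
  · rw [ContinuousAt, extend_attracting,
      h.hasBasis_nhds_attracting.tendsto_iff h'.hasBasis_nhds_attracting]
    exact fun n _ => ⟨n, trivial, fun y hy => (h.extend_mem_zpow_image_iff h' e).2 hy⟩
  · rw [ContinuousAt, extend_repelling,
      h.hasBasis_nhds_repelling.tendsto_iff h'.hasBasis_nhds_repelling]
    exact fun n _ => ⟨n, trivial, fun y hy => (h.extend_mem_zpow_image_iff h' e).not.2 hy⟩
  · have hcomp : h.extend h' e ∘ domainTranslate T V = domainTranslate S W ∘ Prod.map id e :=
      funext (h.extend_domainTranslate h' e)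
    rw [← (isOpenEmbedding_domainTranslate h.mapsTo h.isClopen).continuousAt_iff, hcomp]
    exact ((isOpenEmbedding_domainTranslate h'.mapsTo h'.isClopen).continuous.comp
      (continuous_id.prodMap he)).continuousAt

theorem exists_conjugating_homeomorph [CompactSpace X] [CompactSpace Y] [T2Space Y]
    (h : IsTrappingRegion T xp xm V) (h' : IsTrappingRegion S yp ym W)
    (e : fundamentalDomain T V ≃ₜ fundamentalDomain S W) :
    ∃ Φ : X ≃ₜ Y, ∀ x, Φ (T x) = S (Φ x) :=
  ⟨(h.continuous_extend h' e.toEquiv e.continuous).homeoOfEquivCompactToT2,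
    h.extend_apply_apply h' e.toEquiv⟩

theorem nonempty_fundamentalDomain_homeomorph_nat_bool [CompactSpace X]
    [TopologicalSpace.MetrizableSpace X] [TotallyDisconnectedSpace X] [PerfectSpace X]
    (h : IsTrappingRegion T xp xm V) : Nonempty (fundamentalDomain T V ≃ₜ (ℕ → Bool)) := by
  have hD : IsClopen (fundamentalDomain T V) := isClopen_fundamentalDomain h.isClopen
  have : Nonempty (fundamentalDomain T V) := h.fundamentalDomain_nonempty.to_subtype
  have : CompactSpace (fundamentalDomain T V) := isCompact_iff_compactSpace.1 hD.isClosed.isCompact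
  have : PerfectSpace (fundamentalDomain T V) := perfectSpace_coe_of_preperfect hD.isOpen.preperfect
  exact nonempty_homeomorph_nat_bool

end IsTrappingRegion

end EquivariantExtension

/-- Up to topological conjugacy there is a unique homeomorphism with
north-south dynamics on the Cantor space: any two homeomorphisms with
north-south dynamics on Cantor spaces are topologically conjugate. -/
theorem northSouth_cantor_unique
    {X Y : Type*} [TopologicalSpace X] [TopologicalSpace Y]
    [Nonempty X] [CompactSpace X] [TopologicalSpace.MetrizableSpace X]
    [TotallyDisconnectedSpace X]
    [Nonempty Y] [CompactSpace Y] [TopologicalSpace.MetrizableSpace Y]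
    [TotallyDisconnectedSpace Y]
    (hX : ∀ x : X, (𝓝[≠] x).NeBot) (hY : ∀ y : Y, (𝓝[≠] y).NeBot)
    (T : X ≃ₜ X) (S : Y ≃ₜ Y)
    (hT : NorthSouth T) (hS : NorthSouth S) :
    ∃ Φ : X ≃ₜ Y, ∀ x : X, Φ (T x) = S (Φ x) := by
  have : PerfectSpace X := perfectSpace_iff_forall_not_isolated.2 hX
  have : PerfectSpace Y := perfectSpace_iff_forall_not_isolated.2 hY
  obtain ⟨xp, xm, V, hV⟩ := hT.exists_isTrappingRegion
  obtain ⟨yp, ym, W, hW⟩ := hS.exists_isTrappingRegion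
  obtain ⟨a⟩ := hV.nonempty_fundamentalDomain_homeomorph_nat_bool
  obtain ⟨b⟩ := hW.nonempty_fundamentalDomain_homeomorph_nat_bool
  exact hV.exists_conjugating_homeomorph hW (a.trans b.symm)
end

section
/- Let A ⊆ ℤ^d be a finite positively generating set with 0 ∈ A. Then for every n ∈ ℕ, nA ⊆ n·conv(A) ∩ ℤ^d, and there exists N ∈ ℕ such that for every n > N, (n−N)·conv(A) ∩ ℤ^d ⊆ nA. -/
/-!
The inclusion `nA ⊆ n·conv(A)` holds because the `n`-fold Minkowski sum of the convex set `conv(A)`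
is its dilate.

For the reverse inclusion, a lattice point of `m·conv(A)` has the form `∑ a, t a • a` with `t ≥ 0`
and `∑ a, t a = m`. The integer parts of the `t a` sum to at most `m`, so, as `0 ∈ A`, they
contribute a point of `mA`; the fractional parts leave a remainder in the zonotope `∑ a, [0, a]`.
The zonotope is compact and does not depend on `m`, so only finitely many lattice points occur as
remainders. As the sets `nA` increase to the whole lattice, a single `NA` contains them all.
-/

open Set
open scoped Pointwise

/-- `A ⊆ ℤ^d` is positively generating: every point is in some `n`-fold
Minkowski sum `nA`, `n ≥ 1`. -/
def PosGenZ {d : ℕ} (A : Set (Fin d → ℤ)) : Prop :=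
  ∀ g : Fin d → ℤ, ∃ n : ℕ, 1 ≤ n ∧ g ∈ n • A

/-- The canonical embedding `ℤ^d → ℝ^d`. -/
def coeR {d : ℕ} : (Fin d → ℤ) → (Fin d → ℝ) := fun x i => (x i : ℝ)

open Filter

theorem exists_subset_nsmul_of_finite {M : Type*} [AddMonoid M] {A S : Set M} (h0 : 0 ∈ A)
    (hS : S.Finite) (hSA : S ⊆ ⋃ n : ℕ, n • A) : ∃ N : ℕ, S ⊆ N • A := by
  lift S to Finset M using hS
  have hmono : Monotone fun n : ℕ ↦ n • A := fun _ _ ↦ nsmul_subset_nsmul_right h0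
  exact hmono.directed_le.exists_mem_subset_of_finset_subset_biUnion hSA

section Convexity

variable {𝕜 E : Type*} [Field 𝕜] [LinearOrder 𝕜] [IsStrictOrderedRing 𝕜] [AddCommGroup E]
  [Module 𝕜 E]

/-- On the left `•` is the `n`-fold Minkowski sum, on the right it is the dilation. -/
theorem nsmul_eq_natCast_smul_of_convex {C : Set E} (hC : Convex 𝕜 C) (hne : C.Nonempty) (n : ℕ) :
    n • C = (n : 𝕜) • C := by
  induction n with
  | zero => rw [zero_nsmul, Nat.cast_zero, zero_smul_set hne]
  | succ n ih =>
    rw [succ_nsmul, ih, Nat.cast_succ, hC.add_smul n.cast_nonneg zero_le_one, one_smul]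

theorem nsmul_subset_natCast_smul_convexHull {V : Set E} (hV : V.Nonempty) (n : ℕ) :
    n • V ⊆ (n : 𝕜) • convexHull 𝕜 V := by
  rw [← nsmul_eq_natCast_smul_of_convex (convex_convexHull 𝕜 V) hV.convexHull]
  exact nsmul_subset_nsmul_left (subset_convexHull 𝕜 V)

variable (𝕜) in
/-- The zonotope generated by `V`: the Minkowski sum of the segments `[0, v]` for `v ∈ V`. It
contains the remainders left when coefficients of combinations of `V` are rounded down. -/
def zonotope (V : Finset E) : Set E :=
  ∑ v ∈ V, segment 𝕜 0 v

theorem sum_smul_mem_zonotope {V : Finset E} {t : E → 𝕜} (ht : ∀ v ∈ V, t v ∈ Icc 0 1) :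
    ∑ v ∈ V, t v • v ∈ zonotope 𝕜 V :=
  finsetSum_mem_finsetSum _ _ _ fun v hv ↦ by
    rw [segment_eq_image']
    exact ⟨t v, ht v hv, by simp⟩

theorem smul_convexHull_subset_nsmul_add_zonotope [FloorSemiring 𝕜] {V : Finset E} (h0 : 0 ∈ V)
    {r : 𝕜} (hr : 0 ≤ r) :
    r • convexHull 𝕜 (V : Set E) ⊆ ⌊r⌋₊ • (V : Set E) + zonotope 𝕜 V := by
  rintro _ ⟨x, hx, rfl⟩
  obtain ⟨w, hw0, hw1, rfl⟩ := Finset.mem_convexHull'.1 hx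
  have ht0 : ∀ v ∈ V, 0 ≤ r * w v := fun v hv ↦ mul_nonneg hr (hw0 v hv)
  have hfloor : ∑ v ∈ V, ⌊r * w v⌋₊ ≤ ⌊r⌋₊ := Nat.le_floor <| by
    calc ((∑ v ∈ V, ⌊r * w v⌋₊ : ℕ) : 𝕜)
        = ∑ v ∈ V, (⌊r * w v⌋₊ : 𝕜) := Nat.cast_sum _ _
      _ ≤ ∑ v ∈ V, r * w v := Finset.sum_le_sum fun v hv ↦ Nat.floor_le (ht0 v hv)
      _ = r := by rw [← Finset.mul_sum, hw1, mul_one]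
  have hint : ∑ v ∈ V, ⌊r * w v⌋₊ • v ∈ ⌊r⌋₊ • (V : Set E) := by
    refine nsmul_subset_nsmul_right (Finset.mem_coe.2 h0) hfloor ?_
    rw [← Finset.sum_nsmul_assoc]
    exact finsetSum_mem_finsetSum _ _ _ fun v hv ↦ nsmul_mem_nsmul hv
  have hfrac : ∑ v ∈ V, (r * w v - ⌊r * w v⌋₊) • v ∈ zonotope 𝕜 V :=
    sum_smul_mem_zonotope fun v hv ↦
      ⟨sub_nonneg.2 (Nat.floor_le (ht0 v hv)), sub_le_iff_le_add'.2 (Nat.lt_floor_add_one _).le⟩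
  refine ⟨_, hint, _, hfrac, ?_⟩
  simp only [← Finset.sum_add_distrib, Finset.smul_sum, smul_smul, sub_smul, Nat.cast_smul_eq_nsmul,
    add_sub_cancel]

end Convexity

section CompactRemainder

variable {M E : Type*} [AddCommGroup M] [AddCommGroup E] [Module ℝ E] [TopologicalSpace E]
  [ContinuousAdd E] [ContinuousSMul ℝ E]

theorem isCompact_zonotope (V : Finset E) : IsCompact (zonotope ℝ V) := by
  refine Finset.sum_induction _ IsCompact (fun _ _ ↦ IsCompact.add) isCompact_singleton
    fun v _ ↦ ?_
  rw [segment_eq_image]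
  exact isCompact_Icc.image (by fun_prop)

theorem exists_preimage_smul_convexHull_subset_nsmul {f : M →+ E}
    (hf : Tendsto f cofinite (cocompact E)) {A : Set M} (hfin : A.Finite) (h0 : 0 ∈ A)
    (hgen : ⋃ n : ℕ, n • A = univ) :
    ∃ N : ℕ, ∀ n : ℕ, f ⁻¹' ((n : ℝ) • convexHull ℝ (f '' A)) ⊆ (n + N) • A := by
  obtain ⟨V, hV⟩ := (hfin.image f).exists_finset_coe
  have hfinite : (f ⁻¹' zonotope ℝ V).Finite :=
    tendsto_cofinite_cocompact_iff.1 hf _ (isCompact_zonotope V)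
  obtain ⟨N, hN⟩ := exists_subset_nsmul_of_finite h0 hfinite (hgen ▸ subset_univ _)
  refine ⟨N, fun n x hx ↦ ?_⟩
  have hV0 : (0 : E) ∈ V := by
    rw [← Finset.mem_coe, hV]
    exact ⟨0, h0, map_zero f⟩
  rw [mem_preimage, ← hV] at hx
  have hsplit := smul_convexHull_subset_nsmul_add_zonotope hV0 n.cast_nonneg hx
  rw [Nat.floor_natCast, hV, ← image_nsmul] at hsplit
  obtain ⟨_, ⟨u, hu, rfl⟩, z, hz, huz⟩ := hsplit
  have hrem : x - u ∈ N • A := hN <| by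
    rwa [mem_preimage, map_sub, ← huz, add_sub_cancel_left]
  rw [add_nsmul, ← add_sub_cancel u x]
  exact add_mem_add hu hrem

theorem iterated_minkowski_sums_convex_general {f : M →+ E}
    (hf : Tendsto f cofinite (cocompact E)) {A : Set M} (hfin : A.Finite) (h0 : 0 ∈ A)
    (hgen : ⋃ n : ℕ, n • A = univ) :
    (∀ n : ℕ, f '' (n • A) ⊆ (n : ℝ) • convexHull ℝ (f '' A)) ∧
      ∃ N : ℕ, ∀ n : ℕ, f ⁻¹' ((n : ℝ) • convexHull ℝ (f '' A)) ⊆ (n + N) • A := by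
  refine ⟨fun n ↦ ?_, exists_preimage_smul_convexHull_subset_nsmul hf hfin h0 hgen⟩
  rw [image_nsmul]
  exact nsmul_subset_natCast_smul_convexHull (Nonempty.image f ⟨0, h0⟩) n

end CompactRemainder

/-- The embedding `coeR` as an additive homomorphism. -/
def coeRAddHom (d : ℕ) : (Fin d → ℤ) →+ (Fin d → ℝ) :=
  (Int.castAddHom ℝ).compLeft (Fin d)

theorem tendsto_coeR_cofinite_cocompact {d : ℕ} :
    Tendsto (coeR (d := d)) cofinite (cocompact (Fin d → ℝ)) := by
  rw [← coprodᵢ_cofinite, ← coprodᵢ_cocompact]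
  exact Tendsto.pi_map_coprodᵢ fun _ ↦ Int.tendsto_coe_cofinite

theorem PosGenZ.iUnion_nsmul_eq_univ {d : ℕ} {A : Set (Fin d → ℤ)} (hA : PosGenZ A) :
    ⋃ n : ℕ, n • A = univ :=
  eq_univ_of_forall fun g ↦ mem_iUnion.2 <| (hA g).imp fun _ ↦ And.right

/-- Iterated Minkowski sums of a finite positively generating set `A ⊆ ℤ^d`
containing `0` are roughly the integer points of the dilated convex hull:
`nA ⊆ n·conv(A) ∩ ℤ^d` for all `n`, and there is `N` such that
`(n−N)·conv(A) ∩ ℤ^d ⊆ nA` for all `n > N`. -/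
theorem iterated_minkowski_sums_convex {d : ℕ}
    (A : Set (Fin d → ℤ)) (hfin : A.Finite) (h0 : (0 : Fin d → ℤ) ∈ A)
    (hgen : PosGenZ A) :
    (∀ n : ℕ, ∀ x ∈ n • A,
        coeR x ∈ (n : ℝ) • convexHull ℝ (coeR '' A)) ∧
      ∃ N : ℕ, ∀ n : ℕ, N < n → ∀ x : Fin d → ℤ,
        coeR x ∈ ((n - N : ℕ) : ℝ) • convexHull ℝ (coeR '' A) →
          x ∈ n • A := by
  obtain ⟨hsub, N, hN⟩ := iterated_minkowski_sums_convex_general (f := coeRAddHom d)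
    tendsto_coeR_cofinite_cocompact hfin h0 hgen.iUnion_nsmul_eq_univ
  exact ⟨fun n x hx ↦ hsub n ⟨x, hx, rfl⟩, N, fun n hn x hx ↦
    Nat.sub_add_cancel hn.le ▸ hN (n - N) hx⟩
end

section
/- A nonempty additive subsemigroup S of ℤ^d is a subgroup of ℤ^d if and only if the convex hull of S in ℝ^d equals the real linear span of S. Equivalently, a nonempty subsemigroup S ⊆ ℤ^d is a group if and only if it is not contained in a proper half-space of its linear span. -/
/-!
Call `C` the convex cone generated by `S`. Both conditions turn out to say that `C` is the whole
span `V` of `S`.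

If `S` is a group then `C = V` because `C` is symmetric, and `C` is the convex hull because a conic
combination `∑ cᵢ sᵢ` is the convex combination `∑ (cᵢ / n) (n sᵢ) + (1 - ∑ cᵢ / n) 0` for large
`n`. A cone that is not all of `V` lies in a half-space of `V`: it has nonempty interior in `V`, so
a point outside it can be separated from it.

Conversely let `C = V` and `a ∈ S`, so that `-a = ∑ cᵢ sᵢ` with real `cᵢ ≥ 0`. The lattice points
`k (-a) - ∑ ⌊k cᵢ⌋ sᵢ = ∑ {k cᵢ} sᵢ` are bounded, so two of them, for some `k < m`, coincide.
Subtracting gives `(m - k) (-a) = ∑ (⌊m cᵢ⌋ - ⌊k cᵢ⌋) sᵢ`, and adding `(m - k - 1) a` exhibits `-a`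
as a possibly empty sum of elements of `S`. Hence `-a = ((-a) + (-a)) + a` lies in `S` itself.
-/

open Set

lemma add_mem_of_mem_closure {A : Type*} [AddMonoid A] {S : Set A}
    (hadd : ∀ a ∈ S, ∀ b ∈ S, a + b ∈ S) {x a : A} (hx : x ∈ AddSubmonoid.closure S)
    (ha : a ∈ S) : x + a ∈ S := by
  induction hx using AddSubmonoid.closure_induction generalizing a with
  | mem x hx => exact hadd x hx a ha
  | zero => rwa [zero_add]
  | add x y _ _ ihx ihy => rw [add_assoc]; exact ihx (ihy ha)

lemma add_mem_image {A B : Type*} [AddZeroClass A] [AddZeroClass B] (φ : A →+ B) {S : Set A}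
    (hadd : ∀ a ∈ S, ∀ b ∈ S, a + b ∈ S) : ∀ x ∈ φ '' S, ∀ y ∈ φ '' S, x + y ∈ φ '' S := by
  rintro _ ⟨a, ha, rfl⟩ _ ⟨b, hb, rfl⟩
  exact ⟨a + b, hadd a ha b hb, map_add φ a b⟩

lemma zero_mem_and_neg_mem_image_iff {A B : Type*} [AddGroup A] [AddGroup B] {φ : A →+ B}
    (hφ : Function.Injective φ) (S : Set A) :
    (0 ∈ φ '' S ∧ ∀ x ∈ φ '' S, -x ∈ φ '' S) ↔ (0 ∈ S ∧ ∀ a ∈ S, -a ∈ S) := by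
  rw [← map_zero φ, hφ.mem_set_image, forall_mem_image]
  simp only [← map_neg, hφ.mem_set_image]

lemma sum_fract_mul_smul {R E : Type*} [Ring R] [LinearOrder R] [FloorRing R] [AddCommGroup E]
    [Module R E] (t : Finset E) (c : E → R) (k : ℕ) :
    ∑ y ∈ t, Int.fract (k * c y) • y = k • ∑ y ∈ t, c y • y - ∑ y ∈ t, ⌊k * c y⌋ • y := by
  simp only [Int.fract, sub_smul, mul_smul, Finset.sum_sub_distrib, Int.cast_smul_eq_zsmul,
    Nat.cast_smul_eq_nsmul, Finset.smul_sum]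

section OrderedField

open scoped Pointwise

variable {K E : Type*} [Field K] [LinearOrder K] [IsStrictOrderedRing K] [AddCommGroup E]
  [Module K E]

lemma map_nonpos_of_forall_mem_cone_le {C : PointedCone K E} {f : E →ₗ[K] K} {u : K}
    (hu : ∀ x ∈ C, f x ≤ u) {x : E} (hx : x ∈ C) : f x ≤ 0 := by
  by_contra! hpos
  have hscaled := hu _ (C.smul_mem (r := (|u| + 1) / f x) (by positivity) hx)
  rw [map_smul, smul_eq_mul, div_mul_cancel₀ _ hpos.ne'] at hscaled
  linarith [le_abs_self u]

lemma coe_hull_eq_span_of_neg_mem {S : Set E} (hneg : ∀ a ∈ S, -a ∈ S) :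
    (PointedCone.hull K S : Set E) = Submodule.span K S := by
  have hlineal : Submodule.span K S ≤ (PointedCone.hull K S).lineal :=
    Submodule.span_le.2 fun a ha =>
      ⟨PointedCone.subset_hull ha, PointedCone.subset_hull (hneg a ha)⟩
  exact Subset.antisymm (PointedCone.hull_le_span K S) fun x hx => (hlineal hx).1

lemma convexHull_subset_hull (S : Set E) : convexHull K S ⊆ PointedCone.hull K S :=
  convexHull_min PointedCone.subset_hull (PointedCone.hull K S).convex

lemma convexHull_addSubmonoid_eq_hull [Archimedean K] (M : AddSubmonoid E) :
    convexHull K (M : Set E) = PointedCone.hull K (M : Set E) := by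
  have hzero : (0 : E) ∈ convexHull K (M : Set E) := subset_convexHull K _ M.zero_mem
  have hnsmul (n : ℕ) {x : E} (hx : x ∈ convexHull K (M : Set E)) :
      (n : K) • x ∈ convexHull K (M : Set E) := by
    have hsub : (n : K) • (M : Set E) ⊆ M := by
      rintro _ ⟨y, hy, rfl⟩
      simpa only [Nat.cast_smul_eq_nsmul, SetLike.mem_coe] using M.nsmul_mem hy n
    exact convexHull_mono hsub (convexHull_smul (n : K) (M : Set E) ▸ smul_mem_smul_set hx)
  refine (convexHull_subset_hull _).antisymm fun x hx => ?_
  induction hx using Submodule.span_induction with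
  | mem x hx => exact subset_convexHull K _ hx
  | zero => exact hzero
  | add x y _ _ hx hy =>
    have hsum := add_mem_add hx hy
    rwa [← convexHull_add, AddSubmonoid.coe_add_self_eq] at hsum
  | smul c x _ hx =>
    obtain ⟨n, hn⟩ := exists_nat_gt (c : K)
    have hn_pos : (0 : K) < n := c.2.trans_lt hn
    have hscaled : ((c : K) / n) • (n : K) • x ∈ convexHull K (M : Set E) :=
      (convex_convexHull K _).smul_mem_of_zero_mem hzero (hnsmul n hx)
        ⟨div_nonneg c.2 hn_pos.le, (div_le_one hn_pos).2 hn.le⟩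
    rwa [smul_smul, div_mul_cancel₀ _ hn_pos.ne'] at hscaled

end OrderedField

section Separation

variable {E : Type*} [NormedAddCommGroup E] [NormedSpace ℝ E]

lemma interior_nonempty_of_span_eq_top [FiniteDimensional ℝ E] {C : Set E}
    (hC : Convex ℝ C) (hzero : 0 ∈ C) (hspan : Submodule.span ℝ C = ⊤) :
    (interior C).Nonempty := by
  rw [hC.interior_nonempty_iff_affineSpan_eq_top]
  apply SetLike.coe_injective
  rw [← insert_eq_of_mem hzero, affineSpan_insert_zero, hspan]
  rfl

lemma hull_eq_top_of_span_eq_top [FiniteDimensional ℝ E] {T : Set E}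
    (hspan : Submodule.span ℝ T = ⊤) (hdual : ∀ ℓ : E →ₗ[ℝ] ℝ, (∀ a ∈ T, 0 ≤ ℓ a) → ℓ = 0) :
    PointedCone.hull ℝ T = ⊤ := by
  set C := PointedCone.hull ℝ T
  have hspanC : Submodule.span ℝ (C : Set E) = ⊤ := by
    rw [Submodule.span_span_of_tower, hspan]
  refine eq_top_iff.2 fun x _ => by_contra fun hx => ?_
  obtain ⟨f, hf, hfC⟩ := geometric_hahn_banach_of_nonempty_interior_point C.convex
    (fun hxint => hx (interior_subset hxint))
    (interior_nonempty_of_span_eq_top C.convex C.zero_mem hspanC)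
  have hnonneg : ∀ a ∈ T, 0 ≤ (-f : E →ₗ[ℝ] ℝ) a := fun a ha =>
    neg_nonneg.2 (map_nonpos_of_forall_mem_cone_le (f := (f : E →ₗ[ℝ] ℝ)) hfC
      (PointedCone.subset_hull ha))
  exact hf (ContinuousLinearMap.coe_injective (neg_eq_zero.1 (hdual _ hnonneg)))

theorem coe_hull_eq_span_iff_not_exists_halfSpace {T : Set E}
    [FiniteDimensional ℝ (Submodule.span ℝ T)] :
    (PointedCone.hull ℝ T : Set E) = Submodule.span ℝ T ↔
      ¬ ∃ ℓ : E →ₗ[ℝ] ℝ, (∃ x ∈ Submodule.span ℝ T, ℓ x ≠ 0) ∧ ∀ a ∈ T, 0 ≤ ℓ a := by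
  set V := Submodule.span ℝ T
  constructor
  · rintro hV ⟨ℓ, ⟨x, hx, hℓx⟩, hℓ⟩
    have hhull : PointedCone.hull ℝ T ≤ PointedCone.comap ℓ (PointedCone.positive ℝ ℝ) :=
      Submodule.span_le.2 hℓ
    have hnonneg (y : E) (hy : y ∈ V) : 0 ≤ ℓ y := hhull (hV.ge hy)
    have hneg := hnonneg (-x) (V.neg_mem hx)
    rw [map_neg, neg_nonneg] at hneg
    exact hℓx (hneg.antisymm (hnonneg x hx))
  · intro hhalf
    have htop : PointedCone.hull ℝ ((↑) ⁻¹' T : Set V) = ⊤ := by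
      refine hull_eq_top_of_span_eq_top Submodule.span_span_coe_preimage fun ℓ hℓ => ?_
      obtain ⟨g, rfl⟩ := ℓ.exists_extend
      push Not at hhalf
      ext x
      by_contra hx
      obtain ⟨a, ha, hneg⟩ := hhalf g ⟨x, x.2, hx⟩
      exact hneg.not_ge (hℓ ⟨a, Submodule.subset_span ha⟩ ha)
    have hmap : PointedCone.map V.subtype (PointedCone.hull ℝ ((↑) ⁻¹' T : Set V)) ≤
        PointedCone.hull ℝ T :=
      (Submodule.map_span_le _ _ _).2 fun y hy => PointedCone.subset_hull hy
    exact Subset.antisymm (PointedCone.hull_le_span ℝ T) fun x hx =>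
      hmap (PointedCone.mem_map.2 ⟨⟨x, hx⟩, htop.ge Submodule.mem_top, rfl⟩)

end Separation

section Lattice

variable {E : Type*} [NormedAddCommGroup E] [NormedSpace ℝ E] [FiniteDimensional ℝ E]
  {L : AddSubgroup E} [DiscreteTopology L]

lemma exists_lt_sum_fract_mul_smul_eq {t : Finset E} (htL : (t : Set E) ⊆ L) {c : E → ℝ}
    (hx : ∑ y ∈ t, c y • y ∈ L) :
    ∃ k m : ℕ, k < m ∧
      ∑ y ∈ t, Int.fract (k * c y) • y = ∑ y ∈ t, Int.fract (m * c y) • y := by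
  have := FiniteDimensional.proper_real E
  have hfinite : (Metric.closedBall 0 (∑ y ∈ t, ‖y‖) ∩ (L : Set E)).Finite :=
    Metric.finite_isBounded_inter_isClosed DiscreteTopology.isDiscrete
      Metric.isBounded_closedBall AddSubgroup.isClosed_of_discrete
  have hmem (k : ℕ) : ∑ y ∈ t, Int.fract (k * c y) • y ∈
      Metric.closedBall 0 (∑ y ∈ t, ‖y‖) ∩ (L : Set E) := by
    constructor
    · refine mem_closedBall_zero_iff.2 (norm_sum_le_of_le t fun y _ => ?_)
      rw [norm_smul, Real.norm_of_nonneg (Int.fract_nonneg _)]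
      exact mul_le_of_le_one_left (norm_nonneg y) (Int.fract_lt_one _).le
    · rw [SetLike.mem_coe, sum_fract_mul_smul]
      exact L.sub_mem (L.nsmul_mem hx k) (L.sum_mem fun y hy => L.zsmul_mem (htL hy) _)
  exact hfinite.exists_lt_map_eq_of_forall_mem hmem

theorem exists_pos_nsmul_mem_closure_of_mem_hull {S : Set E} (hSL : S ⊆ L) {x : E} (hxL : x ∈ L)
    (hx : x ∈ PointedCone.hull ℝ S) : ∃ n : ℕ, 0 < n ∧ n • x ∈ AddSubmonoid.closure S := by
  obtain ⟨c, hcS, hc, rfl⟩ := PointedCone.mem_hull_set.1 hx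
  rw [Finsupp.sum] at hxL ⊢
  obtain ⟨k, m, hkm, heq⟩ := exists_lt_sum_fract_mul_smul_eq (hcS.trans hSL) hxL
  have hrelation : (m - k) • ∑ y ∈ c.support, c y • y =
      ∑ y ∈ c.support, (⌊m * c y⌋ - ⌊k * c y⌋) • y := by
    rw [sum_fract_mul_smul, sum_fract_mul_smul, sub_eq_sub_iff_add_eq_add] at heq
    simp only [sub_nsmul _ hkm.le, sub_smul, Finset.sum_sub_distrib]
    rw [← sub_eq_add_neg, sub_eq_sub_iff_add_eq_add, ← heq, add_comm]
  refine ⟨m - k, Nat.sub_pos_of_lt hkm, hrelation ▸ sum_mem fun y hy => ?_⟩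
  have hfloor : ⌊k * c y⌋ ≤ ⌊m * c y⌋ :=
    Int.floor_le_floor (mul_le_mul_of_nonneg_right (Nat.cast_le.2 hkm.le) (hc y))
  rw [← Int.toNat_of_nonneg (sub_nonneg.2 hfloor), natCast_zsmul]
  exact nsmul_mem (AddSubmonoid.subset_closure (hcS hy)) _

lemma neg_mem_closure_of_neg_mem_hull {S : Set E} (hSL : S ⊆ L) {a : E} (ha : a ∈ S)
    (hneg : -a ∈ PointedCone.hull ℝ S) : -a ∈ AddSubmonoid.closure S := by
  obtain ⟨n, hn, hmem⟩ :=
    exists_pos_nsmul_mem_closure_of_mem_hull hSL (L.neg_mem (hSL ha)) hneg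
  have hsum : -a = n • (-a) + (n - 1) • a := by
    rw [sub_nsmul _ hn, one_nsmul, smul_neg, ← add_assoc, neg_add_cancel, zero_add]
  rw [hsum]
  exact add_mem hmem (nsmul_mem (AddSubmonoid.subset_closure ha) _)

theorem zero_mem_and_neg_mem_iff_coe_hull_eq_span {S : Set E} (hSL : S ⊆ L) (hne : S.Nonempty)
    (hadd : ∀ a ∈ S, ∀ b ∈ S, a + b ∈ S) :
    (0 ∈ S ∧ ∀ a ∈ S, -a ∈ S) ↔
      (PointedCone.hull ℝ S : Set E) = Submodule.span ℝ S := by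
  refine ⟨fun hgroup => coe_hull_eq_span_of_neg_mem hgroup.2, fun hspan => ?_⟩
  have hclosure (a : E) (ha : a ∈ S) : -a ∈ AddSubmonoid.closure S :=
    neg_mem_closure_of_neg_mem_hull hSL ha
      (hspan.ge (neg_mem (Submodule.subset_span ha)))
  obtain ⟨a, ha⟩ := hne
  refine ⟨?_, fun b hb => ?_⟩
  · simpa only [neg_add_cancel] using add_mem_of_mem_closure hadd (hclosure a ha) ha
  · simpa only [neg_add_cancel_right] using
      add_mem_of_mem_closure hadd (add_mem (hclosure b hb) (hclosure b hb)) hb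

lemma zero_mem_and_neg_mem_iff_convexHull_eq_span {S : Set E} (hSL : S ⊆ L)
    (hadd : ∀ a ∈ S, ∀ b ∈ S, a + b ∈ S) :
    (0 ∈ S ∧ ∀ a ∈ S, -a ∈ S) ↔ convexHull ℝ S = Submodule.span ℝ S := by
  constructor
  · rintro ⟨hzero, hneg⟩
    exact (convexHull_addSubmonoid_eq_hull ⟨⟨S, fun ha hb => hadd _ ha _ hb⟩, hzero⟩).trans
      (coe_hull_eq_span_of_neg_mem hneg)
  · intro hconv
    have hne : S.Nonempty := convexHull_nonempty_iff.1 ⟨0, hconv.ge (zero_mem _)⟩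
    exact (zero_mem_and_neg_mem_iff_coe_hull_eq_span hSL hne hadd).2 <|
      Subset.antisymm (PointedCone.hull_le_span ℝ S) (hconv ▸ convexHull_subset_hull S)

variable (L) in
theorem subsemigroup_isSubgroup_iff_convexHull_eq_span_general (S : Set E) (hSL : S ⊆ L)
    (hne : S.Nonempty) (hadd : ∀ a ∈ S, ∀ b ∈ S, a + b ∈ S) :
    ((0 ∈ S ∧ ∀ a ∈ S, -a ∈ S) ↔ convexHull ℝ S = (Submodule.span ℝ S : Set E)) ∧
      ((0 ∈ S ∧ ∀ a ∈ S, -a ∈ S) ↔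
        ¬ ∃ ℓ : E →ₗ[ℝ] ℝ, (∃ x ∈ Submodule.span ℝ S, ℓ x ≠ 0) ∧ ∀ a ∈ S, 0 ≤ ℓ a) :=
  ⟨zero_mem_and_neg_mem_iff_convexHull_eq_span hSL hadd,
    (zero_mem_and_neg_mem_iff_coe_hull_eq_span hSL hne hadd).trans
      coe_hull_eq_span_iff_not_exists_halfSpace⟩

end Lattice

section IntegerVectors

variable {d : ℕ}

/-- The embedding `coeR` of `ℤ^d` into `ℝ^d` as a homomorphism of additive groups. -/
def coeRHom : (Fin d → ℤ) →+ (Fin d → ℝ) where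
  toFun := coeR
  map_zero' := funext fun _ => Int.cast_zero
  map_add' _ _ := funext fun _ => Int.cast_add _ _

lemma coeR_injective : Function.Injective (coeR : (Fin d → ℤ) → Fin d → ℝ) :=
  Int.cast_injective.comp_left

lemma zero_mem_and_neg_mem_image_coeR_iff (S : Set (Fin d → ℤ)) :
    (0 ∈ coeR '' S ∧ ∀ x ∈ coeR '' S, -x ∈ coeR '' S) ↔ (0 ∈ S ∧ ∀ a ∈ S, -a ∈ S) :=
  zero_mem_and_neg_mem_image_iff (φ := coeRHom) coeR_injective S

lemma coeR_mem_span_basisFun (a : Fin d → ℤ) :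
    coeR a ∈ Submodule.span ℤ (range (Pi.basisFun ℝ (Fin d))) :=
  ((Pi.basisFun ℝ (Fin d)).mem_span_iff_repr_mem ℤ _).2 fun i => ⟨a i, rfl⟩

end IntegerVectors

/-- A nonempty additive subsemigroup `S` of `ℤ^d` is a subgroup if and only if
the convex hull of `S` in `ℝ^d` equals the real linear span of `S`;
equivalently, if and only if `S` is not contained in a proper half-space of
its linear span. -/
theorem subsemigroup_isSubgroup_iff_convexHull_eq_span {d : ℕ}
    (S : Set (Fin d → ℤ)) (hne : S.Nonempty)
    (hadd : ∀ a ∈ S, ∀ b ∈ S, a + b ∈ S) :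
    ((0 ∈ S ∧ ∀ a ∈ S, -a ∈ S) ↔
        convexHull ℝ (coeR '' S) =
          (Submodule.span ℝ (coeR '' S) : Set (Fin d → ℝ))) ∧
      ((0 ∈ S ∧ ∀ a ∈ S, -a ∈ S) ↔
        ¬ ∃ ℓ : (Fin d → ℝ) →ₗ[ℝ] ℝ,
            (∃ x ∈ Submodule.span ℝ (coeR '' S), ℓ x ≠ 0) ∧
              ∀ a ∈ S, 0 ≤ ℓ (coeR a)) := by
  simpa only [← zero_mem_and_neg_mem_image_coeR_iff S, forall_mem_image] using
    subsemigroup_isSubgroup_iff_convexHull_eq_span_general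
      (Submodule.span ℤ (range (Pi.basisFun ℝ (Fin d)))).toAddSubgroup (coeR '' S)
      (image_subset_iff.2 fun a _ => coeR_mem_span_basisFun a) (hne.image coeR)
      (add_mem_image coeRHom hadd)
end

section
/- Let d ≥ 2 and let A ⊆ ℤ^d be a finite positively generating set with 0 ∈ A. Then the natural extension of φ_A : 𝒫(ℤ^d) → 𝒫(ℤ^d) is perfect, i.e. the space X̂ = {x ∈ (𝒫(ℤ^d))^ℤ : x_{n+1} = φ_A(x_n) for all n ∈ ℤ}, with the product topology, has no isolated points. -/
open Filter Set
open scoped Pointwise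

/-- The product (cylinder) topology on `𝒫(V) ≅ {0,1}^V`. -/
noncomputable def cylTop (V : Type*) : TopologicalSpace (Set V) :=
  TopologicalSpace.induced
    (fun (S : Set V) (v : V) => @decide (v ∈ S) (Classical.propDecidable _))
    inferInstance

/-- The natural extension of `φ_A : 𝒫(ℤ^d) → 𝒫(ℤ^d)`, `φ_A(W) = W + A`, as a
space: bi-infinite orbits `x : ℤ → 𝒫(ℤ^d)` with `x (n+1) = φ_A (x n)`. -/
def NatExt {d : ℕ} (A : Set (Fin d → ℤ)) : Type _ :=
  {x : ℤ → Set (Fin d → ℤ) // ∀ n : ℤ, x (n + 1) = x n + A}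

/-- The topology on the natural extension: the subspace topology induced from
the product topology on `(𝒫(ℤ^d))^ℤ`, where each factor carries the product
topology of `{0,1}^{ℤ^d}`. -/
noncomputable def natExtTop {d : ℕ} (A : Set (Fin d → ℤ)) :
    TopologicalSpace (NatExt A) :=
  TopologicalSpace.induced (Subtype.val)
    (@Pi.topologicalSpace ℤ (fun _ => Set (Fin d → ℤ))
      (fun _ => cylTop (Fin d → ℤ)))

/-!
A neighbourhood of an orbit `x` of `φ_A` contains all orbits that agree with `x` on a finite set
`F` at one sufficiently early time, which may be taken to be `0`. By pigeonhole, every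
`v ∈ F ∩ x 0` has a past in `x` that keeps using some `t ∈ A`, so `x` contains the orbit starting
far back from the points `v - m • t`. This orbit is a moving tangent cone of `A`, and it contains
a pointed one, located at a vertex of the smallest face through `t`. The union `y` of these
pointed cones agrees with `x` on `F`, and so does `y ∪ z` where `z` is a moving half-space that
avoids `F` at time `0`. One of the two differs from `x` unless `z ⊆ y`. As `d ≥ 2`, the half-space
can be chosen to support `A` at two points `s ≠ s'`. Going backwards by alternating `s` and `s'`,
one stays in the half-space, while by Dickson's lemma a finite union of pointed cones at vertices
cannot contain the whole path.
-/

section TangentMonoid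

variable {V : Type*} [AddCommGroup V]

lemma wellQuasiOrdered_sub_mem_closure {S : Set V} (hS : S.Finite) :
    WellQuasiOrdered fun u v : AddSubmonoid.closure S => (v - u : V) ∈ AddSubmonoid.closure S := by
  intro w
  have := hS.fintype
  choose c hc using fun m => AddSubmonoid.mem_closure_iff_of_fintype.1 (w m).2
  obtain ⟨i, j, hij, hle⟩ := wellQuasiOrdered_le c
  refine ⟨i, j, hij, AddSubmonoid.mem_closure_iff_of_fintype.2 ⟨c j - c i, ?_⟩⟩
  rw [hc, hc, ← Finset.sum_sub_distrib]
  refine Finset.sum_congr rfl fun a _ => ?_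
  rw [Pi.sub_apply, sub_nsmul _ (hle a), sub_eq_add_neg]

/-- The tangent monoid of `A` at `e`: the integral version of the tangent cone at `e` of the convex
hull of `A`. -/
def tangentMonoid (A : Set V) (e : V) : AddSubmonoid V :=
  AddSubmonoid.closure ((· - e) '' A)

variable {A : Set V} {a e s s' t w : V}

lemma sub_mem_tangentMonoid (ha : a ∈ A) (e : V) : a - e ∈ tangentMonoid A e :=
  AddSubmonoid.subset_closure (mem_image_of_mem _ ha)

lemma tangentMonoid_le (hte : t - e ∈ tangentMonoid A t) :
    tangentMonoid A e ≤ tangentMonoid A t := by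
  refine AddSubmonoid.closure_le.2 ?_
  rintro _ ⟨a, ha, rfl⟩
  simpa using add_mem (sub_mem_tangentMonoid ha t) hte

lemma exists_add_nsmul_mem_nsmul_of_mem_tangentMonoid (hw : w ∈ tangentMonoid A e) :
    ∃ n : ℕ, w + n • e ∈ n • A := by
  induction hw using AddSubmonoid.closure_induction with
  | mem _ h =>
    obtain ⟨a, ha, rfl⟩ := h
    exact ⟨1, by simpa using ha⟩
  | zero => exact ⟨0, by simp⟩
  | add u v _ _ ihu ihv =>
    obtain ⟨m, hm⟩ := ihu
    obtain ⟨n, hn⟩ := ihv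
    refine ⟨m + n, ?_⟩
    rw [add_nsmul, add_nsmul, add_add_add_comm]
    exact Set.add_mem_add hm hn

/-- The points `a ∈ A` with `t - a ∈ tangentMonoid A t` form the smallest face of `A` containing
`t`. A point `e` that maximizes on this face a translation-invariant linear order is a vertex. -/
lemma exists_isPointed_tangentMonoid {L : Type*} [AddCommGroup L] [LinearOrder L]
    [IsOrderedAddMonoid L] {φ : V →+ L} (hφ : Function.Injective φ) (hA : A.Finite) (ht : t ∈ A) :
    ∃ e ∈ A, t - e ∈ tangentMonoid A t ∧ (tangentMonoid A e).IsPointed := by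
  obtain ⟨e, ⟨heA, hte⟩, hmax⟩ :=
    (hA.sep fun a => t - a ∈ tangentMonoid A t).exists_maximalFor φ _ ⟨t, ht, by simp⟩
  have hnonpos : ∀ w ∈ tangentMonoid A e, -w ∈ tangentMonoid A e → φ w ≤ 0 := by
    intro w hw
    induction hw using AddSubmonoid.closure_induction with
    | mem _ h =>
      obtain ⟨a, ha, rfl⟩ := h
      intro hneg
      have hta : t - a ∈ tangentMonoid A t := by
        simpa using add_mem hte (tangentMonoid_le hte hneg)
      simpa using (le_total (φ a) (φ e)).elim id (hmax ⟨ha, hta⟩)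
    | zero => simp
    | add u v hu hv ihu ihv =>
      intro hneg
      rw [map_add]
      exact add_nonpos (ihu (by simpa using add_mem hneg hv))
        (ihv (by simpa [add_comm] using add_mem hneg hu))
  refine ⟨e, heA, hte, fun w hw hneg => (map_eq_zero_iff φ hφ).1 ?_⟩
  exact le_antisymm (hnonpos w hw hneg) (by simpa using hnonpos (-w) hneg (by simpa using hw))

lemma nsmul_two_nsmul_sub_notMem_tangentMonoid [IsAddTorsionFree V]
    (he : (tangentMonoid A e).IsPointed) (heA : e ∈ A) (hs : s ∈ A) (hne : s' ≠ s)
    (hs' : s' ∈ A ∨ A ⊆ {s}) {k : ℕ} (hk : k ≠ 0) :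
    k • (2 • e - (s + s')) ∉ tangentMonoid A e := by
  intro hmem
  rcases hs' with hs' | hA
  · have hvertex : ∀ a ∈ A, ∀ b ∈ A, k • (2 • e - (a + b)) ∈ tangentMonoid A e → a = e := by
      intro a ha b hb hab
      have hneg : -(a - e) ∈ tangentMonoid A e := by
        obtain ⟨l, rfl⟩ := Nat.exists_eq_succ_of_ne_zero hk
        convert add_mem (add_mem hab (nsmul_mem (sub_mem_tangentMonoid ha e) l))
          (nsmul_mem (sub_mem_tangentMonoid hb e) (l + 1)) using 1
        module
      exact sub_eq_zero.1 (he _ (sub_mem_tangentMonoid ha e) hneg)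
    exact hne ((hvertex s' hs' s hs (by rwa [add_comm s'])).trans (hvertex s hs s' hs' hmem).symm)
  · obtain rfl : e = s := hA heA
    obtain rfl : A = {e} := Subset.antisymm hA (singleton_subset_iff.2 heA)
    have hbot : tangentMonoid {e} e = ⊥ := by
      simpa [tangentMonoid] using AddSubmonoid.closure_singleton_zero
    rw [hbot, AddSubmonoid.mem_bot, smul_eq_zero, or_iff_right hk, two_nsmul,
      add_sub_add_left_eq_sub, sub_eq_zero] at hmem
    exact hne hmem.symm

end TangentMonoid

section Orbits

variable {V : Type*} [AddCommGroup V]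

/-- `x` is a bi-infinite orbit of `φ_A : W ↦ W + A`. -/
def IsOrbit (A : Set V) (x : ℤ → Set V) : Prop :=
  ∀ n : ℤ, x (n + 1) = x n + A

variable {A : Set V} {x y : ℤ → Set V} {u v w e t : V}

namespace IsOrbit

lemma comp_add (hx : IsOrbit A x) (k : ℤ) : IsOrbit A fun n => x (n + k) := fun n => by
  simpa only [add_right_comm] using hx (n + k)

lemma union (hx : IsOrbit A x) (hy : IsOrbit A y) : IsOrbit A fun n => x n ∪ y n := fun n => by
  simp only [hx n, hy n, Set.union_add]

lemma biUnion {ι : Type*} {I : Set ι} {x : ι → ℤ → Set V} (hx : ∀ i ∈ I, IsOrbit A (x i)) :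
    IsOrbit A fun n => ⋃ i ∈ I, x i n := fun n => by
  simp only [Set.iUnion_add]
  exact iUnion₂_congr fun i hi => hx i hi n

lemma add_natCast (hx : IsOrbit A x) (n : ℤ) (k : ℕ) : x (n + k) = x n + k • A := by
  induction k with
  | zero => simp
  | succ k ih => rw [Nat.cast_succ, ← add_assoc, hx, ih, succ_nsmul, add_assoc]

lemma add_mem (hx : IsOrbit A x) {m n : ℤ} {k : ℕ} (hu : u ∈ x m) (hw : w ∈ k • A)
    (hn : m + k = n) : u + w ∈ x n := by
  rw [← hn, hx.add_natCast]
  exact Set.add_mem_add hu hw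

lemma subset_of_forall_neg (hx : IsOrbit A x) (hy : IsOrbit A y)
    (h : ∀ k : ℕ, x (-k) ⊆ y (-k)) (n : ℤ) : x n ⊆ y n := by
  obtain ⟨j, hj⟩ : ∃ j : ℕ, -(n.natAbs : ℤ) + j = n := ⟨(n + n.natAbs).toNat, by omega⟩
  rw [← hj, hx.add_natCast, hy.add_natCast]
  exact Set.add_subset_add_right (h _)

end IsOrbit

lemma exists_sub_nsmul_mem_nsmul (hA : A.Finite) (hne : A.Nonempty) {m n : ℕ}
    (hmn : A.ncard * m ≤ n) (hw : w ∈ n • A) : ∃ t ∈ A, w - m • t ∈ (n - m) • A := by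
  classical
  obtain ⟨f, hf, rfl⟩ := Set.mem_nsmul_iff_sum.1 hw
  obtain ⟨t, ht, hcard⟩ := Finset.exists_le_card_fiber_of_mul_le_card_of_maps_to
    (s := .univ) (t := hA.toFinset) (f := f) (n := m) (by simpa using hf) (by simpa using hne)
    (by simpa [Set.ncard_eq_toFinset_card A hA] using hmn)
  obtain ⟨T, hT, rfl⟩ := Finset.exists_subset_card_eq hcard
  have hsumT : ∑ i ∈ T, f i = T.card • t :=
    Finset.sum_eq_card_nsmul fun i hi => (Finset.mem_filter.1 (hT hi)).2
  refine ⟨t, by simpa using ht, ?_⟩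
  rw [← hsumT, ← Finset.sum_compl_add_sum T f, add_sub_cancel_right]
  simpa [Finset.card_compl] using Set.finsetSum_mem_finsetSum Tᶜ (fun _ => A) f fun i _ => hf i

lemma IsOrbit.exists_forall_sub_nsmul_mem (hx : IsOrbit A x) (hA : A.Finite) (hv : v ∈ x 0) :
    ∃ t ∈ A, ∀ m : ℕ, v - m • t ∈ x (-m) := by
  have hne : A.Nonempty := by
    rw [← neg_add_cancel (1 : ℤ), hx] at hv
    exact Set.Nonempty.of_add_right ⟨v, hv⟩
  have hstep : ∀ m : ℕ, ∃ t ∈ A, v - m • t ∈ x (-m) := by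
    intro m
    obtain ⟨u, hu, w, hw, rfl⟩ : v ∈ x (-(A.ncard * m : ℕ)) + (A.ncard * m) • A := by
      rwa [← hx.add_natCast, neg_add_cancel]
    obtain ⟨t, ht, hwt⟩ := exists_sub_nsmul_mem_nsmul hA hne le_rfl hw
    have hle : m ≤ A.ncard * m := Nat.le_mul_of_pos_left m ((Set.ncard_pos hA).2 hne)
    exact ⟨t, ht, add_sub_assoc u w _ ▸ hx.add_mem hu hwt (by omega)⟩
  obtain ⟨t, ht, hfreq⟩ := hA.frequently_exists.1 (Frequently.of_forall (f := atTop) hstep)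
  refine ⟨t, ht, fun m => ?_⟩
  obtain ⟨n, hmn, hn⟩ := frequently_atTop.1 hfreq m
  have := hx.add_mem hn (Set.nsmul_mem_nsmul (n := n - m) ht) (n := -m) (by omega)
  rwa [sub_nsmul t hmn, ← add_assoc, sub_add_cancel, ← sub_eq_add_neg] at this

/-- The orbit whose value at time `0` is the translate of the tangent cone at `e` to the apex `v`,
the apex moving with velocity `e`. -/
def coneOrbit (A : Set V) (v e : V) (n : ℤ) : Set V :=
  {w | w - (v + n • e) ∈ tangentMonoid A e}

lemma isOrbit_coneOrbit (he : e ∈ A) (v : V) : IsOrbit A (coneOrbit A v e) := by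
  refine fun n => Subset.antisymm (fun w hw => ⟨w - e, ?_, e, he, sub_add_cancel w e⟩) ?_
  · rw [coneOrbit, mem_ofPred_eq, add_smul, one_smul] at hw
    rw [coneOrbit, mem_ofPred_eq]
    convert hw using 1
    abel
  · rintro _ ⟨u, hu, a, ha, rfl⟩
    change u + a - (v + (n + 1) • e) ∈ tangentMonoid A e
    convert add_mem hu (sub_mem_tangentMonoid ha e) using 1
    module

lemma mem_coneOrbit_zero (A : Set V) (v e : V) : v ∈ coneOrbit A v e 0 := by
  simp [coneOrbit]

lemma coneOrbit_subset_coneOrbit (he : e ∈ A) (hte : t - e ∈ tangentMonoid A t) (v : V) (n : ℤ) :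
    coneOrbit A v e n ⊆ coneOrbit A v t n := by
  have hn : n • (e - t) ∈ tangentMonoid A t := by
    obtain ⟨k, rfl | rfl⟩ := n.eq_nat_or_neg
    · simpa using nsmul_mem (sub_mem_tangentMonoid he t) k
    · simpa [smul_sub, neg_add_eq_sub] using nsmul_mem hte k
  intro w hw
  rw [coneOrbit, mem_ofPred_eq]
  convert add_mem (tangentMonoid_le hte hw) hn using 1
  module

lemma IsOrbit.coneOrbit_subset (hx : IsOrbit A x) (ht : t ∈ A)
    (hv : ∀ m : ℕ, v - m • t ∈ x (-m)) (n : ℤ) : coneOrbit A v t n ⊆ x n := by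
  refine (isOrbit_coneOrbit ht v).subset_of_forall_neg hx (fun k w hw => ?_) n
  obtain ⟨m, hm⟩ := exists_add_nsmul_mem_nsmul_of_mem_tangentMonoid hw
  have := hx.add_mem (hv (k + m)) hm (n := -k) (by push_cast; ring)
  convert this using 1
  module

lemma IsOrbit.exists_coneOrbit_subset {L : Type*} [AddCommGroup L] [LinearOrder L]
    [IsOrderedAddMonoid L] {φ : V →+ L} (hφ : Function.Injective φ) (hA : A.Finite)
    (hx : IsOrbit A x) (hv : v ∈ x 0) :
    ∃ e ∈ A, (tangentMonoid A e).IsPointed ∧ ∀ n, coneOrbit A v e n ⊆ x n := by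
  obtain ⟨t, ht, hvt⟩ := hx.exists_forall_sub_nsmul_mem hA hv
  obtain ⟨e, he, hte, hpointed⟩ := exists_isPointed_tangentMonoid hφ hA ht
  exact ⟨e, he, hpointed, fun n =>
    (coneOrbit_subset_coneOrbit he hte v n).trans (hx.coneOrbit_subset ht hvt n)⟩

lemma exists_lt_sub_mem_tangentMonoid (hA : A.Finite) {I : Set V} (hI : I.Finite) {e : V → V}
    {p : ℕ → V} {n : ℕ → ℤ} (hp : ∀ m, p m ∈ ⋃ v ∈ I, coneOrbit A v (e v) (n m)) :
    ∃ v ∈ I, ∃ i j, i < j ∧ p j - p i - (n j - n i) • e v ∈ tangentMonoid A (e v) := by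
  simp only [mem_iUnion] at hp
  choose v hvI hv using hp
  have := hI.to_subtype
  obtain ⟨g, hg⟩ := (Finite.wellQuasiOrdered (α := I) (· = ·)).exists_monotone_subseq
    fun m => ⟨v m, hvI m⟩
  have hconst (m : ℕ) : v (g m) = v (g 0) := congrArg Subtype.val (hg 0 m m.zero_le).symm
  obtain ⟨i, j, hij, hmem⟩ := wellQuasiOrdered_sub_mem_closure (hA.image (· - e (v (g 0))))
    fun m => ⟨_, hconst m ▸ hv (g m)⟩
  refine ⟨v (g 0), hvI _, g i, g j, g.strictMono hij, ?_⟩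
  rw [tangentMonoid]
  convert hmem using 1
  module

/-- A half-space moving with speed `c`; an orbit of `φ_A` when `c` is the maximum of `ℓ` on `A`. -/
def halfSpaceOrbit {L : Type*} [AddCommGroup L] [LE L] (ℓ : V →+ L) (τ c : L) (n : ℤ) : Set V :=
  {w | ℓ w ≤ τ + n • c}

lemma isOrbit_halfSpaceOrbit {L : Type*} [AddCommGroup L] [PartialOrder L] [IsOrderedAddMonoid L]
    {ℓ : V →+ L} {s : V} (hs : s ∈ A) (hmax : ∀ a ∈ A, ℓ a ≤ ℓ s) (τ : L) :
    IsOrbit A (halfSpaceOrbit ℓ τ (ℓ s)) := by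
  refine fun n => Subset.antisymm (fun w hw => ⟨w - s, ?_, s, hs, sub_add_cancel w s⟩) ?_
  · rw [halfSpaceOrbit, mem_ofPred_eq, add_smul, one_smul, ← add_assoc] at hw
    rwa [halfSpaceOrbit, mem_ofPred_eq, map_sub, sub_le_iff_le_add]
  · rintro _ ⟨u, hu, a, ha, rfl⟩
    rw [halfSpaceOrbit, mem_ofPred_eq, map_add, add_smul, one_smul, ← add_assoc]
    exact add_le_add hu (hmax a ha)

/-- The points `c - m • (s + s')` at the times `-2m` stay in the half-space. Two of them in the same
cone put their difference, a multiple of `2 • e - (s + s')`, into a tangent monoid. -/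
lemma exists_not_halfSpaceOrbit_subset (hA : A.Finite) {I : Set V} (hI : I.Finite) {e : V → V}
    {ℓ : V →+ ℤ} (hℓ : ℓ ≠ 0) {s s' : V} (hss' : ℓ s' = ℓ s)
    (he : ∀ v ∈ I, ∀ k ≠ 0, k • (2 • e v - (s + s')) ∉ tangentMonoid A (e v)) (τ : ℤ) :
    ∃ n, ¬ halfSpaceOrbit ℓ τ (ℓ s) n ⊆ ⋃ v ∈ I, coneOrbit A v (e v) n := by
  by_contra! hsub
  obtain ⟨c, hc⟩ : ∃ c, ℓ c ≤ τ := by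
    obtain ⟨u, hu⟩ := DFunLike.ne_iff.1 hℓ
    have hsq : 0 < ℓ u * ℓ u := mul_self_pos.2 hu
    refine ⟨(-(|τ| * ℓ u)) • u, ?_⟩
    rw [map_zsmul, smul_eq_mul]
    nlinarith [neg_abs_le τ, abs_nonneg τ]
  obtain ⟨v, hv, i, j, hij, hmem⟩ := exists_lt_sub_mem_tangentMonoid hA hI
    (p := fun m => c - m • (s + s')) (n := fun m => -(2 * m)) fun m => hsub _ (by
      simp only [halfSpaceOrbit, mem_ofPred_eq, map_sub, map_nsmul, map_add, hss', smul_eq_mul,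
        nsmul_eq_mul]
      linarith)
  obtain ⟨k, rfl⟩ := Nat.exists_eq_add_of_lt hij
  refine he v hv (k + 1) k.succ_ne_zero ?_
  convert hmem using 1
  push_cast
  module

/-- The pattern of `x` on `F` is realized both by a finite union of cone orbits at vertices and by
its union with a remote half-space orbit. -/
lemma IsOrbit.exists_ne_inter_eq {L : Type*} [AddCommGroup L] [LinearOrder L]
    [IsOrderedAddMonoid L] {φ : V →+ L} (hφ : Function.Injective φ) (hA : A.Finite)
    {ℓ : V →+ ℤ} (hℓ : ℓ ≠ 0) {s s' : V} (hs : s ∈ A) (hmax : ∀ a ∈ A, ℓ a ≤ ℓ s) (hne : s' ≠ s)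
    (hss' : ℓ s' = ℓ s) (hs' : s' ∈ A ∨ A ⊆ {s}) (hx : IsOrbit A x) {F : Set V} (hF : F.Finite) :
    ∃ y, IsOrbit A y ∧ y ≠ x ∧ F ∩ y 0 = F ∩ x 0 := by
  have : IsAddTorsionFree V := hφ.isAddTorsionFree φ
  choose! e heA hpointed hsub using fun v (hv : v ∈ F ∩ x 0) =>
    hx.exists_coneOrbit_subset hφ hA hv.2
  let y (n : ℤ) : Set V := ⋃ v ∈ F ∩ x 0, coneOrbit A v (e v) n
  have hy : IsOrbit A y := .biUnion fun v hv => isOrbit_coneOrbit (heA v hv) v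
  have hyF : F ∩ y 0 = F ∩ x 0 := by
    refine Subset.antisymm (inter_subset_inter_right F (iUnion₂_subset fun v hv => hsub v hv 0)) ?_
    exact fun v hv => ⟨hv.1, mem_biUnion hv (mem_coneOrbit_zero A v (e v))⟩
  obtain ⟨τ, hτ⟩ : ∃ τ, F ∩ halfSpaceOrbit ℓ τ (ℓ s) 0 = ∅ := by
    obtain ⟨b, hb⟩ := (hF.image ℓ).bddBelow
    refine ⟨b - 1, eq_empty_of_forall_notMem fun v ⟨hvF, hv⟩ => ?_⟩
    have hbv : b ≤ ℓ v := hb (mem_image_of_mem ℓ hvF)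
    have hvb : ℓ v ≤ b - 1 + (0 : ℤ) • ℓ s := hv
    linarith [zero_smul ℤ (ℓ s)]
  obtain ⟨n, hn⟩ := exists_not_halfSpaceOrbit_subset hA (hF.inter_of_left (x 0)) hℓ hss'
    (fun v hv _ hk => nsmul_two_nsmul_sub_notMem_tangentMonoid (hpointed v hv) (heA v hv) hs hne hs'
      hk) τ
  by_cases hyx : y = x
  · refine ⟨_, hy.union (isOrbit_halfSpaceOrbit hs hmax τ), fun h => hn ?_, ?_⟩
    · exact union_eq_left.1 ((congrFun h n).trans (congrFun hyx n).symm)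
    · rw [inter_union_distrib_left, hτ, union_empty, hyF]
  · exact ⟨y, hy, hyx, hyF⟩

end Orbits

/-- When `f` has a unique maximizer, an edge of largest slope issuing from it in the planar set
`(f, g) '' A` gives the two points. -/
lemma exists_two_maximizers {α : Type*} {A : Set α} (hA : A.Finite) (hnt : A.Nontrivial)
    (f g : α → ℤ) : ∃ p q : ℤ, (p ≠ 0 ∨ q ≠ 0) ∧ ∃ s ∈ A, ∃ s' ∈ A, s' ≠ s ∧
      p * f s' + q * g s' = p * f s + q * g s ∧ ∀ a ∈ A, p * f a + q * g a ≤ p * f s + q * g s := by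
  obtain ⟨s, hs, hmax⟩ := exists_max_image A f hA hnt.nonempty
  by_cases htie : ∃ s' ∈ A, s' ≠ s ∧ f s' = f s
  · obtain ⟨s', hs', hne, heq⟩ := htie
    exact ⟨1, 0, .inl one_ne_zero, s, hs, s', hs', hne, by simpa using heq, by simpa using hmax⟩
  push Not at htie
  have hlt (a : α) (ha : a ∈ A \ {s}) : 0 < f s - f a :=
    sub_pos.2 ((hmax a ha.1).lt_of_ne (htie a ha.1 ha.2))
  obtain ⟨s', hs', hslope⟩ := exists_max_image (A \ {s}) (fun a => ((g a - g s : ℤ) : ℚ) /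
    (f s - f a : ℤ)) hA.sdiff (hnt.exists_ne s)
  refine ⟨g s' - g s, f s - f s', .inr (hlt s' hs').ne', s, hs, s', hs'.1, hs'.2, by ring, ?_⟩
  intro a ha
  obtain rfl | hne := eq_or_ne a s
  · rfl
  have hcross : (g a - g s) * (f s - f s') ≤ (g s' - g s) * (f s - f a) := by
    have := hslope a ⟨ha, hne⟩
    rw [div_le_div_iff₀ (by exact_mod_cast hlt a ⟨ha, hne⟩) (by exact_mod_cast hlt s' hs')] at this
    exact_mod_cast this
  linarith

/-- For a singleton `A` there is no second maximizer in `A`, and any other point of the supporting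
hyperplane serves. -/
lemma exists_supporting_pair {d : ℕ} (hd : 2 ≤ d) {A : Set (Fin d → ℤ)} (hA : A.Finite)
    (hne : A.Nonempty) : ∃ ℓ : (Fin d → ℤ) →+ ℤ, ℓ ≠ 0 ∧ ∃ s ∈ A, (∀ a ∈ A, ℓ a ≤ ℓ s) ∧
      ∃ s', s' ≠ s ∧ ℓ s' = ℓ s ∧ (s' ∈ A ∨ A ⊆ {s}) := by
  let i : Fin d := ⟨0, by omega⟩
  let j : Fin d := ⟨1, by omega⟩
  have hij : i ≠ j := by simp [i, j]
  rcases A.subsingleton_or_nontrivial with hsub | hnt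
  · obtain ⟨s, hs⟩ := hne
    have hAs : A ⊆ {s} := fun a ha => hsub ha hs
    refine ⟨Pi.evalAddMonoidHom _ i, fun h => ?_, s, hs, fun a ha => (congrArg _ (hAs ha)).le,
      s + Pi.single j 1, by simp, by simp [hij], .inr hAs⟩
    simpa using DFunLike.congr_fun h (Pi.single i 1)
  · obtain ⟨p, q, hpq, s, hs, s', hs', hne', hss', hmax⟩ :=
      exists_two_maximizers hA hnt (fun a => a i) (fun a => a j)
    refine ⟨p • Pi.evalAddMonoidHom _ i + q • Pi.evalAddMonoidHom _ j, fun h => ?_, s, hs,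
      by simpa using hmax, s', hne', by simpa using hss', .inl hs'⟩
    have hp : p = 0 := by simpa [hij] using DFunLike.congr_fun h (Pi.single i 1)
    have hq : q = 0 := by simpa [hij.symm] using DFunLike.congr_fun h (Pi.single j 1)
    exact hpq.elim (· hp) (· hq)

section Topology

lemma add_inter_eq_of_inter_sub_eq {V : Type*} [AddGroup V] {S T B F : Set V}
    (h : (F - B) ∩ S = (F - B) ∩ T) : F ∩ (S + B) = F ∩ (T + B) := by
  have hsub : ∀ {S T : Set V}, (F - B) ∩ S = (F - B) ∩ T → F ∩ (S + B) ⊆ F ∩ (T + B) := by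
    rintro S T h _ ⟨hF, u, hu, b, hb, rfl⟩
    have huF : u ∈ F - B := ⟨u + b, hF, b, hb, add_sub_cancel_right u b⟩
    exact ⟨hF, Set.add_mem_add (h.subset ⟨huF, hu⟩).2 hb⟩
  exact (hsub h).antisymm (hsub h.symm)

lemma exists_finite_of_mem_nhds_cylTop {V : Type*} {S : Set V} {U : Set (Set V)}
    (hU : U ∈ @nhds _ (cylTop V) S) :
    ∃ F : Set V, F.Finite ∧ ∀ T : Set V, F ∩ T = F ∩ S → T ∈ U := by
  rw [cylTop, nhds_induced, nhds_pi] at hU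
  obtain ⟨P, hP, hPU⟩ := hU
  obtain ⟨F, hF, Q, hQ, hQP⟩ := Filter.mem_pi.1 hP
  refine ⟨F, hF, fun T hT => hPU (hQP fun v hv => ?_)⟩
  have hiff : v ∈ T ↔ v ∈ S := by simpa [hv] using Set.ext_iff.1 hT v
  have hdec : @decide (v ∈ T) (Classical.propDecidable _) =
      @decide (v ∈ S) (Classical.propDecidable _) := decide_eq_decide.2 hiff
  change @decide (v ∈ T) (Classical.propDecidable _) ∈ Q v
  exact hdec ▸ mem_of_mem_nhds (hQ v)

lemma exists_window_of_mem_nhds {d : ℕ} {A : Set (Fin d → ℤ)} (hA : A.Finite) {x : NatExt A}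
    {U : Set (NatExt A)} (hU : U ∈ @nhds _ (natExtTop A) x) :
    ∃ (b : ℤ) (F : Set (Fin d → ℤ)), F.Finite ∧
      ∀ y : NatExt A, F ∩ y.1 b = F ∩ x.1 b → y ∈ U := by
  let : TopologicalSpace (Set (Fin d → ℤ)) := cylTop (Fin d → ℤ)
  rw [natExtTop, nhds_induced, nhds_pi] at hU
  obtain ⟨P, hP, hPU⟩ := hU
  obtain ⟨I, hI, Q, hQ, hQP⟩ := Filter.mem_pi.1 hP
  choose F hF hFQ using fun i => exists_finite_of_mem_nhds_cylTop (hQ i)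
  obtain ⟨b, hb⟩ := hI.bddBelow
  have hkA (k : ℕ) : (k • A).Finite := by simpa using (k • hA.toFinset).finite_toSet
  refine ⟨b, ⋃ i ∈ I, (F i - (i - b).toNat • A), hI.biUnion fun i _ => (hF i).sub (hkA _),
    fun y hy => hPU (hQP fun i hi => hFQ i _ ?_)⟩
  have hwindow : ∀ z : NatExt A, z.1 i = z.1 b + (i - b).toNat • A := by
    intro z
    have hz : IsOrbit A z.1 := z.2
    rw [← hz.add_natCast, Int.toNat_of_nonneg (sub_nonneg.2 (hb hi)), add_sub_cancel]
  change F i ∩ y.1 i = F i ∩ x.1 i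
  rw [hwindow, hwindow]
  refine add_inter_eq_of_inter_sub_eq ?_
  have hsub := subset_biUnion_of_mem (u := fun i => F i - (i - b).toNat • A) hi
  rw [← inter_eq_self_of_subset_left hsub, inter_assoc, hy, inter_assoc]

end Topology

theorem natExt_perfect_general {d : ℕ} (hd : 2 ≤ d) {A : Set (Fin d → ℤ)} (hA : A.Finite)
    (hne : A.Nonempty) (x : NatExt A) : (@nhdsWithin (NatExt A) (natExtTop A) x {x}ᶜ).NeBot := by
  let := natExtTop A
  rw [← mem_closure_iff_nhdsWithin_neBot, mem_closure_iff_nhds]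
  intro U hU
  obtain ⟨b, F, hF, hFU⟩ := exists_window_of_mem_nhds hA hU
  obtain ⟨ℓ, hℓ, s, hs, hmax, s', hne', hss', hs'⟩ := exists_supporting_pair hd hA hne
  have hx : IsOrbit A x.1 := x.2
  obtain ⟨y, hy, hyx, hyF⟩ := (hx.comp_add b).exists_ne_inter_eq
    (φ := (toLexAddEquiv (Fin d → ℤ)).toAddMonoidHom) (toLexAddEquiv _).injective hA hℓ hs hmax hne'
    hss' hs' hF
  have hz : IsOrbit A fun n => y (n + -b) := hy.comp_add (-b)
  refine ⟨⟨fun n => y (n + -b), hz⟩, hFU _ (by simpa using hyF), fun h => hyx ?_⟩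
  funext n
  simpa using congrFun (congrArg Subtype.val h) (n + b)

/-- For `d ≥ 2` and a finite positively generating set `A ⊆ ℤ^d` containing
`0`, the natural extension of `φ_A` is perfect: it has no isolated points. -/
theorem natExt_perfect {d : ℕ} (hd : 2 ≤ d)
    (A : Set (Fin d → ℤ)) (hfin : A.Finite) (h0 : (0 : Fin d → ℤ) ∈ A)
    (hgen : PosGenZ A) :
    ∀ x : NatExt A,
      (@nhdsWithin (NatExt A) (natExtTop A) x {x}ᶜ).NeBot := by
  exact natExt_perfect_general hd hfin ⟨0, h0⟩
end
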